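/- arXiv:1001.1293 — 2 statements merged into one kernel-verified Lean document; each statement's English description precedes it below -/
import Mathlib

section
/- There exists a constant c > 0 (depending only on ξ and the sequence (x_k)) such that every nonzero polynomial R ∈ ℤ[T] of degree d ≤ 6 satisfies |R(ξ)| ≥ c·‖R‖^(−γ³) if d ≤ 3, and |R(ξ)| ≥ c·‖R‖^(γ²−2γ^d) if 4 ≤ d ≤ 6. -/
open Polynomial Filter

noncomputable def gold : ℝ := (1 + Real.sqrt 5) / 2

def Mmat (k : ℕ) : Matrix (Fin 2) (Fin 2) ℤ := !![3, (-1)^k; (-1)^(k+1), 0]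

noncomputable def Xnorm (x : ℕ → Matrix (Fin 2) (Fin 2) ℤ) (k : ℕ) : ℝ :=
  max |(x k 0 0 : ℝ)| (max |(x k 0 1 : ℝ)| |(x k 1 1 : ℝ)|)

def MarkoffSeq (ξ : ℝ) (x : ℕ → Matrix (Fin 2) (Fin 2) ℤ) : Prop :=
  (∀ k, 1 ≤ k → x k 0 1 = x k 1 0) ∧
  (∀ k, 1 ≤ k → (x k).det = 1) ∧
  ∃ c₁ c₂ c₃ : ℝ, 0 < c₁ ∧ 0 < c₂ ∧ 0 < c₃ ∧ ∀ k, 1 ≤ k →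
    (c₁ * Xnorm x k ^ gold ≤ Xnorm x (k+1) ∧ Xnorm x (k+1) ≤ c₂ * Xnorm x k ^ gold) ∧
    (|(x k 0 0 : ℝ) * ξ - (x k 0 1 : ℝ)| ≤ c₃ / Xnorm x k ∧
     |(x k 0 1 : ℝ) * ξ - (x k 1 1 : ℝ)| ≤ c₃ / Xnorm x k) ∧
    (x (k+2) = x (k+1) * Mmat (k+1) * x k ∧ x (k+2) = x k * Mmat k * x (k+1)) ∧
    (Xnorm x k < Xnorm x (k+1) ∧ Xnorm x k < (1 + ξ^2) * |(x k 0 0 : ℝ)|)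

def polyNorm (P : Polynomial ℤ) : ℕ := P.support.sup fun i => (P.coeff i).natAbs

noncomputable def distInt (η : ℝ) : ℝ := |η - round η|

noncomputable def ratHeight (α : ℚ) : ℝ := max |(α.num : ℝ)| (α.den : ℝ)

def IsMinIntPoly (α : ℂ) (P : Polynomial ℤ) : Prop :=
  P ≠ 0 ∧ Polynomial.aeval α P = 0 ∧ P.content = 1 ∧ 0 < P.leadingCoeff ∧
  ∀ Q : Polynomial ℤ, Q ≠ 0 → Polynomial.aeval α Q = 0 → P.degree ≤ Q.degree

noncomputable def Qpoly (x : ℕ → Matrix (Fin 2) (Fin 2) ℤ) (k : ℕ) : Polynomial ℤ :=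
  Polynomial.C (x k 0 1 * x (k+1) 1 1 - x k 1 1 * x (k+1) 0 1)
  - Polynomial.C (x k 0 0 * x (k+1) 1 1 - x k 1 1 * x (k+1) 0 0) * Polynomial.X
  + Polynomial.C (x k 0 0 * x (k+1) 0 1 - x k 0 1 * x (k+1) 0 0) * Polynomial.X ^ 2

/-!
The `k`-th matrix of the sequence gives an integer quadratic `F_k` of height about `X_k` with one
root `α_k` extremely close to `ξ`, the other root `β_k` close to `ξ ∓ 3`, and a unit `u_k` of size
about `X_k` in its quadratic order. Markoff's equation makes the resultant of consecutive quadratics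
as small as possible: `a_{k+1} ^ 2 F_k(α_{k+1}) F_k(β_{k+1}) = -4`. For `R` of degree at most
`2 j` the numbers `u ^ i a ^ (2 j) F_k(β) ^ j R(α)` and `u ^ (-i) a ^ (2 j) F_k(α) ^ j R(β)`, taken
at level `k + 1`, are conjugate elements of the order `ℤ + ℤ u`, and the factor of `R(β)` is at most
a small power of `X_{k+1}`; in degree `2 j + 1` the numbers still lie in `ℤ + ℤ α`. Suppose that
`R(ξ)`, hence `R(α)`, is very small while `X_{k+1}` exceeds a suitable power of `‖R‖`. In degree at
most `3` both conjugates are so small that they vanish; then `2 R` is a multiple of the quadratic at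
level `k + 1` by a polynomial of degree at most one, and such multiples are bounded below directly.
In higher degree such a factor is excluded by the height of the quadratic, so the conjugates are
nonzero. This is absurd in degree `5` because `ξ` is not well approximable by rational numbers, and
in degree `4` because both would be the same integer smaller than `1`. In degree `6` both would
again be the same integer, but their sizes, which `R'(ξ)` transports from level `k + 3` to level
`k + 1`, differ.
-/

lemma gold_sq : gold ^ 2 = gold + 1 := Real.goldenRatio_sq

lemma lt_gold : 1.618 < gold := by
  have h : (2.236 : ℝ) < √5 := Real.lt_sqrt_of_sq_lt (by norm_num)
  rw [gold]
  linarith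

lemma gold_lt : gold < 1.619 := by
  have h : √5 < (2.238 : ℝ) := (Real.sqrt_lt' (by norm_num)).2 (by norm_num)
  rw [gold]
  linarith

/-! ### Logarithmic sizes -/

/-- `y` is nonzero and `|y|` equals `exp s` up to a factor `exp (± K)`: the language in which all
estimates are phrased, products and powers becoming linear in `s` and `K`. -/
def HasLogSize (K y s : ℝ) : Prop := y ≠ 0 ∧ |Real.log y - s| ≤ K

lemma exp_add_exp_le {r r' s : ℝ} (hr : r + 1 ≤ s) (hr' : r' + 1 ≤ s) :
    Real.exp r + Real.exp r' ≤ Real.exp s := by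
  have htwo : (2 : ℝ) ≤ Real.exp 1 := by linarith [Real.add_one_le_exp 1]
  have hs : Real.exp s = Real.exp 1 * Real.exp (s - 1) := by rw [← Real.exp_add]; ring_nf
  have h1 : Real.exp r ≤ Real.exp (s - 1) := Real.exp_le_exp.2 (by linarith)
  have h2 : Real.exp r' ≤ Real.exp (s - 1) := Real.exp_le_exp.2 (by linarith)
  nlinarith [Real.exp_pos (s - 1)]

lemma hasLogSize_log {y : ℝ} (hy : y ≠ 0) : HasLogSize 0 y (Real.log y) := ⟨hy, by simp⟩

lemma hasLogSize_three_zero {y : ℝ} (hl : 1 ≤ |y|) (hu : |y| ≤ 8) : HasLogSize 3 y 0 := by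
  have hlog : Real.log |y| ≤ 3 := by
    rw [Real.log_le_iff_le_exp (by linarith)]
    have htwo : (2 : ℝ) ≤ Real.exp 1 := by linarith [Real.add_one_le_exp 1]
    calc |y| ≤ 2 ^ 3 := by linarith
      _ ≤ Real.exp 1 ^ 3 := by gcongr
      _ = Real.exp 3 := by rw [← Real.exp_nat_mul]; norm_num
  refine ⟨abs_pos.1 (by linarith), ?_⟩
  rwa [sub_zero, ← Real.log_abs, abs_of_nonneg (Real.log_nonneg hl)]

lemma hasLogSize_of_le_of_le {K y s : ℝ} (hl : Real.exp (s - K) ≤ |y|)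
    (hu : |y| ≤ Real.exp (s + K)) : HasLogSize K y s := by
  have hpos : 0 < |y| := (Real.exp_pos _).trans_le hl
  refine ⟨abs_pos.1 hpos, ?_⟩
  rw [← Real.log_abs, abs_sub_le_iff]
  have h1 := (Real.le_log_iff_exp_le hpos).2 hl
  have h2 := (Real.log_le_iff_le_exp hpos).2 hu
  constructor <;> linarith

namespace HasLogSize

variable {K K' y y' s s' : ℝ}

lemma ne_zero (h : HasLogSize K y s) : y ≠ 0 := h.1

lemma exp_le_abs (h : HasLogSize K y s) : Real.exp (s - K) ≤ |y| := by
  rw [← Real.le_log_iff_exp_le (abs_pos.2 h.1), Real.log_abs]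
  linarith [(abs_le.1 h.2).1]

lemma abs_le_exp (h : HasLogSize K y s) : |y| ≤ Real.exp (s + K) := by
  rw [← Real.log_le_iff_le_exp (abs_pos.2 h.1), Real.log_abs]
  linarith [(abs_le.1 h.2).2]

lemma neg (h : HasLogSize K y s) : HasLogSize K (-y) s :=
  ⟨neg_ne_zero.2 h.1, by simpa only [Real.log_neg_eq_log] using h.2⟩

lemma sub_comm (h : HasLogSize K (y - y') s) : HasLogSize K (y' - y) s := by
  simpa only [neg_sub] using h.neg

lemma shift (h : HasLogSize K y s) (hs : |s - s'| ≤ K') : HasLogSize (K + K') y s' :=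
  ⟨h.1, (abs_sub_le _ s _).trans (add_le_add h.2 hs)⟩

lemma mono (h : HasLogSize K y s) (hK : K ≤ K') : HasLogSize K' y s := ⟨h.1, h.2.trans hK⟩

lemma abs_sub_le (h : HasLogSize K y s) (h' : HasLogSize K' y s') : |s - s'| ≤ K + K' := by
  have := _root_.abs_sub_le s (Real.log y) s'
  rw [abs_sub_comm s (Real.log y)] at this
  linarith [h.2, h'.2]

lemma mul (h : HasLogSize K y s) (h' : HasLogSize K' y' s') :
    HasLogSize (K + K') (y * y') (s + s') := by
  refine ⟨mul_ne_zero h.1 h'.1, ?_⟩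
  rw [Real.log_mul h.1 h'.1, add_sub_add_comm]
  exact (abs_add_le _ _).trans (add_le_add h.2 h'.2)

lemma zpow (h : HasLogSize K y s) (i : ℤ) : HasLogSize (|(i : ℝ)| * K) (y ^ i) (i * s) := by
  refine ⟨zpow_ne_zero i h.1, ?_⟩
  rw [Real.log_zpow, ← mul_sub, abs_mul]
  exact mul_le_mul_of_nonneg_left h.2 (abs_nonneg _)

lemma pow (h : HasLogSize K y s) (n : ℕ) : HasLogSize (n * K) (y ^ n) (n * s) := by
  simpa using h.zpow n

lemma inv (h : HasLogSize K y s) : HasLogSize K y⁻¹ (-s) := by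
  simpa using h.zpow (-1)

lemma div (h : HasLogSize K y s) (h' : HasLogSize K' y' s') :
    HasLogSize (K + K') (y / y') (s - s') := h.mul h'.inv

lemma of_mul_left (h : HasLogSize K (y * y') s) (h' : HasLogSize K' y s') :
    HasLogSize (K + K') y' (s - s') := by
  simpa [mul_div_cancel_left₀ _ h'.1] using h.div h'

lemma abs_mul_le_exp {r : ℝ} (h : HasLogSize K y s) (hr : |y'| ≤ Real.exp r) :
    |y * y'| ≤ Real.exp (s + K + r) := by
  rw [abs_mul, Real.exp_add]
  exact mul_le_mul h.abs_le_exp hr (abs_nonneg _) (Real.exp_pos _).le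

lemma of_abs_sub_le {r : ℝ} (h : HasLogSize K y s) (hr : |y' - y| ≤ Real.exp r)
    (hrs : r + K + 1 ≤ s) (hK : 0 ≤ K) : HasLogSize (K + 1) y' s := by
  have hl := h.exp_le_abs
  have hu := h.abs_le_exp
  have htri := abs_sub_abs_le_abs_sub y' y
  have htri' := abs_sub_abs_le_abs_sub y y'
  rw [abs_sub_comm y y'] at htri'
  refine hasLogSize_of_le_of_le ?_ ?_
  · linarith [exp_add_exp_le (r := r) (r' := s - (K + 1)) (s := s - K) (by linarith) (by linarith)]
  · linarith [exp_add_exp_le (r := r) (r' := s + K) (s := s + (K + 1)) (by linarith) (by linarith)]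

end HasLogSize

/-! ### Integer polynomials -/

/-- The logarithm of the height `polyNorm`, the size of a polynomial on the scale of
`HasLogSize`. -/
noncomputable def logNorm (R : ℤ[X]) : ℝ := Real.log (polyNorm R)

lemma abs_coeff_le_polyNorm (R : ℤ[X]) (i : ℕ) : |(R.coeff i : ℝ)| ≤ polyNorm R := by
  by_cases hi : i ∈ R.support
  · have h := Finset.le_sup (f := fun i => (R.coeff i).natAbs) hi
    rw [← Int.cast_abs, Int.abs_eq_natAbs]
    exact_mod_cast h
  · rw [notMem_support_iff.1 hi]
    simp

lemma one_le_polyNorm {R : ℤ[X]} (hR : R ≠ 0) : (1 : ℝ) ≤ polyNorm R := by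
  have h : (1 : ℝ) ≤ |(R.leadingCoeff : ℝ)| := by
    exact_mod_cast Int.one_le_abs (leadingCoeff_ne_zero.2 hR)
  exact h.trans (abs_coeff_le_polyNorm R _)

lemma polyNorm_le {R : ℤ[X]} {M : ℝ} (hM : 0 ≤ M) (h : ∀ i, |(R.coeff i : ℝ)| ≤ M) :
    (polyNorm R : ℝ) ≤ M := by
  rw [← Nat.le_floor_iff hM]
  refine Finset.sup_le fun i _ => Nat.le_floor ?_
  rw [Nat.cast_natAbs, Int.cast_abs]
  exact h i

lemma logNorm_nonneg (R : ℤ[X]) : 0 ≤ logNorm R := Real.log_natCast_nonneg _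

lemma polyNorm_le_exp_logNorm (R : ℤ[X]) : (polyNorm R : ℝ) ≤ Real.exp (logNorm R) :=
  Real.le_exp_log _

lemma abs_aeval_le {R : ℤ[X]} {n : ℕ} (hn : R.natDegree ≤ n) {B y : ℝ} (hB : 1 ≤ B)
    (hy : |y| ≤ B) : |aeval y R| ≤ (n + 1) * B ^ n * polyNorm R := by
  rw [aeval_eq_sum_range' (Nat.lt_succ_of_le hn)]
  calc |∑ i ∈ Finset.range (n + 1), R.coeff i • y ^ i|
      ≤ ∑ i ∈ Finset.range (n + 1), |R.coeff i • y ^ i| := Finset.abs_sum_le_sum_abs _ _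
    _ ≤ ∑ _i ∈ Finset.range (n + 1), B ^ n * polyNorm R := by
        refine Finset.sum_le_sum fun i hi => ?_
        have hpow : |y| ^ i ≤ B ^ n :=
          (pow_le_pow_left₀ (abs_nonneg y) hy i).trans
            (pow_le_pow_right₀ hB (Finset.mem_range_succ_iff.1 hi))
        rw [zsmul_eq_mul, abs_mul, abs_pow, mul_comm]
        exact mul_le_mul hpow (abs_coeff_le_polyNorm R i) (abs_nonneg _) (by positivity)
    _ = (n + 1) * B ^ n * polyNorm R := by simp [mul_assoc]

lemma polyNorm_derivative_le {R : ℤ[X]} {n : ℕ} (hn : R.natDegree ≤ n) :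
    (polyNorm (derivative R) : ℝ) ≤ n * polyNorm R := by
  refine polyNorm_le (by positivity) fun i => ?_
  rw [coeff_derivative, Int.cast_mul, abs_mul, mul_comm]
  rcases lt_or_ge n (i + 1) with hi | hi
  · rw [coeff_eq_zero_of_natDegree_lt (hn.trans_lt hi), Int.cast_zero, abs_zero, mul_zero]
    positivity
  · refine mul_le_mul ?_ (abs_coeff_le_polyNorm R _) (abs_nonneg _) (by positivity)
    push_cast
    rw [abs_of_nonneg (by positivity)]
    exact_mod_cast hi

lemma abs_aeval_derivative_le {R : ℤ[X]} {n : ℕ} (hn : R.natDegree ≤ n) {B y : ℝ} (hB : 1 ≤ B)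
    (hy : |y| ≤ B) : |aeval y (derivative R)| ≤ n * (n + 1) * B ^ n * polyNorm R := by
  have hdeg : (derivative R).natDegree ≤ n := (natDegree_derivative_le R).trans (by omega)
  calc |aeval y (derivative R)|
      ≤ (n + 1) * B ^ n * polyNorm (derivative R) := abs_aeval_le hdeg hB hy
    _ ≤ (n + 1) * B ^ n * (n * polyNorm R) := by gcongr; exact polyNorm_derivative_le hn
    _ = n * (n + 1) * B ^ n * polyNorm R := by ring

lemma abs_aeval_sub_aeval_le {R : ℤ[X]} {n : ℕ} (hn : R.natDegree ≤ n) {B y z : ℝ} (hB : 1 ≤ B)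
    (hy : |y| ≤ B) (hz : |z| ≤ B) :
    |aeval y R - aeval z R| ≤ n * (n + 1) * B ^ n * polyNorm R * |y - z| :=
  (convex_Icc (-B) B).norm_image_sub_le_of_norm_hasDerivWithin_le
    (fun w _ => (R.hasDerivAt_aeval w).hasDerivWithinAt)
    (fun _ hw => abs_aeval_derivative_le hn hB (abs_le.2 hw)) (abs_le.1 hz) (abs_le.1 hy)

lemma abs_aeval_sub_linear_le {R : ℤ[X]} {n : ℕ} (hn : R.natDegree ≤ n) {B y z w : ℝ}
    (hB : 1 ≤ B) (hy : |y| ≤ B) (hz : |z| ≤ B) (hw : |w| ≤ B) {δ : ℝ}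
    (hyw : |y - w| ≤ δ) (hzw : |z - w| ≤ δ) :
    |aeval y R - aeval z R - aeval w (derivative R) * (y - z)| ≤
      n ^ 2 * (n + 1) * B ^ n * polyNorm R * δ * |y - z| := by
  have hdeg : (derivative R).natDegree ≤ n := (natDegree_derivative_le R).trans (by omega)
  have hbound : ∀ v ∈ Set.Icc (w - δ) (w + δ) ∩ Set.Icc (-B) B,
      ‖aeval v (derivative R) - aeval w (derivative R)‖ ≤
        n ^ 2 * (n + 1) * B ^ n * polyNorm R * δ := by
    rintro v ⟨hv, hvB⟩
    have hvw : |v - w| ≤ δ := abs_le.2 ⟨by linarith [hv.1], by linarith [hv.2]⟩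
    calc ‖aeval v (derivative R) - aeval w (derivative R)‖
        ≤ n * (n + 1) * B ^ n * polyNorm (derivative R) * |v - w| :=
          abs_aeval_sub_aeval_le hdeg hB (abs_le.2 hvB) hw
      _ ≤ n * (n + 1) * B ^ n * (n * polyNorm R) * δ := by
          gcongr
          exact polyNorm_derivative_le hn
      _ = n ^ 2 * (n + 1) * B ^ n * polyNorm R * δ := by ring
  have hderiv : ∀ v : ℝ, HasDerivAt (fun v => aeval v R - aeval w (derivative R) * v)
      (aeval v (derivative R) - aeval w (derivative R)) v := fun v => by
    simpa using
      (R.hasDerivAt_aeval v).fun_sub ((hasDerivAt_id v).const_mul (aeval w (derivative R)))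
  have hmem : ∀ v : ℝ, |v| ≤ B → |v - w| ≤ δ → v ∈ Set.Icc (w - δ) (w + δ) ∩ Set.Icc (-B) B :=
    fun v hv hvw => ⟨⟨by linarith [(abs_le.1 hvw).1], by linarith [(abs_le.1 hvw).2]⟩, abs_le.1 hv⟩
  have := ((convex_Icc _ _).inter (convex_Icc _ _)).norm_image_sub_le_of_norm_hasDerivWithin_le
    (fun v _ => (hderiv v).hasDerivWithinAt) hbound (hmem z hz hzw) (hmem y hy hyw)
  rw [Real.norm_eq_abs, Real.norm_eq_abs] at this
  convert this using 2
  ring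

lemma pow_mul_aeval_mul_aeval_mem {S A : Type*} [CommRing S] [CommRing A] [Algebra S A]
    (O : Subalgebra S A) {a θ θ' : A} (ha : a ∈ O) (hθ : a * θ ∈ O) (hθ' : a * θ' ∈ O)
    (hθθ' : a * (θ * θ') ∈ O) {m : ℕ} {G R : S[X]} (hG : G.natDegree ≤ m) (hR : R.natDegree ≤ m) :
    a ^ m * aeval θ' G * aeval θ R ∈ O := by
  have monomial : ∀ {η η' : A}, a * η ∈ O → a * (η * η') ∈ O → ∀ {i l : ℕ}, l ≤ i → i ≤ m →
      a ^ m * η' ^ l * η ^ i ∈ O := by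
    intro η η' hη hηη' i l hl hi
    obtain ⟨p, rfl⟩ := Nat.exists_eq_add_of_le hl
    obtain ⟨q, rfl⟩ := Nat.exists_eq_add_of_le hi
    have : a ^ (l + p + q) * η' ^ l * η ^ (l + p) = (a * (η * η')) ^ l * (a * η) ^ p * a ^ q := by
      ring
    rw [this]
    exact mul_mem (mul_mem (pow_mem hηη' l) (pow_mem hη p)) (pow_mem ha q)
  rw [aeval_eq_sum_range' (Nat.lt_succ_of_le hG), aeval_eq_sum_range' (Nat.lt_succ_of_le hR),
    mul_assoc, Finset.sum_mul_sum, Finset.mul_sum]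
  refine sum_mem fun l hl => ?_
  rw [Finset.mul_sum]
  refine sum_mem fun i hi => ?_
  rw [smul_mul_smul_comm, mul_smul_comm, ← mul_assoc]
  refine O.smul_mem ?_ _
  rw [Finset.mem_range_succ_iff] at hl hi
  rcases le_total l i with hli | hil
  · exact monomial hθ hθθ' hli hi
  · rw [mul_right_comm]
    exact monomial hθ' (by rwa [mul_comm θ']) hil hl

/-! ### Pairs of conjugate roots -/

/-- The group of pairs `(m + n y, m + n y')` with `m n : ℤ`; for conjugate quadratic numbers `y, y'`
this is the image of `ℤ + ℤ y` under its two real embeddings. -/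
def conjLattice (y y' : ℝ) : AddSubgroup (ℝ × ℝ) := AddSubgroup.closure {1, (y, y')}

section conjLattice

variable {y y' v v' : ℝ}

lemma mem_conjLattice :
    (v, v') ∈ conjLattice y y' ↔ ∃ m n : ℤ, v = m + n * y ∧ v' = m + n * y' := by
  rw [conjLattice, AddSubgroup.mem_closure_pair]
  simp [Prod.ext_iff, eq_comm]

lemma intCast_mem_conjLattice (y y' : ℝ) (m : ℤ) : (m : ℝ × ℝ) ∈ conjLattice y y' :=
  mem_conjLattice.2 ⟨m, 0, by simp, by simp⟩

lemma self_mem_conjLattice (y y' : ℝ) : (y, y') ∈ conjLattice y y' :=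
  mem_conjLattice.2 ⟨0, 1, by simp, by simp⟩

lemma exists_intCast_eq_of_mem_conjLattice (h : (v, v') ∈ conjLattice y y')
    (hlt : |v| + |v'| < |y - y'|) : ∃ m : ℤ, v = m ∧ v' = m := by
  obtain ⟨m, n, hv, hv'⟩ := mem_conjLattice.1 h
  have hsub : |v - v'| = |(n : ℝ)| * |y - y'| := by
    rw [← abs_mul, hv, hv']
    ring_nf
  have hn : n = 0 := by
    by_contra hn
    have hn1 : (1 : ℝ) ≤ |(n : ℝ)| := by exact_mod_cast Int.one_le_abs hn
    nlinarith [abs_sub v v', abs_nonneg (y - y')]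
  exact ⟨m, by simpa [hn] using hv, by simpa [hn] using hv'⟩

lemma eq_zero_of_mem_conjLattice (h : (v, v') ∈ conjLattice y y')
    (hlt : |v| + |v'| < |y - y'|) (hv' : |v'| < 1) : v = 0 ∧ v' = 0 := by
  obtain ⟨m, rfl, rfl⟩ := exists_intCast_eq_of_mem_conjLattice h hlt
  have hm : m = 0 := Int.abs_lt_one_iff.1 (by exact_mod_cast hv')
  simp [hm]

end conjLattice

/-- `θ` and `θ'` are the two roots of `a T² + (3 e a - 2 b) T + (c - 3 e b)`, where the symmetric
matrix `((a, b), (b, c))` has determinant `1` and `e = ± 1`. -/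
structure MarkoffRoots (a b c e : ℤ) (θ θ' : ℝ) : Prop where
  sign : (e : ℝ) * e = 1
  det : (a : ℝ) * c - b * b = 1
  sum : (a : ℝ) * (θ + θ') = 2 * b - 3 * e * a
  prod : (a : ℝ) * (θ * θ') = c - 3 * e * b

/-- The unit of norm `1` and trace `3 a` in the quadratic order attached to a Markoff matrix with
first row `(a, b)`, sign `e` and root `θ`. -/
def markoffUnit (a b e : ℤ) (θ : ℝ) : ℝ := 3 * a - e * b + e * a * θ

/-- The quadratic polynomial attached to the matrix `((a, b), (b, c))` and the sign `e`. -/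
noncomputable def markoffQuad (a b c e : ℤ) : ℤ[X] :=
  C a * X ^ 2 + C (3 * e * a - 2 * b) * X + C (c - 3 * e * b)

lemma natDegree_markoffQuad_le (a b c e : ℤ) : (markoffQuad a b c e).natDegree ≤ 2 :=
  natDegree_quadratic_le

lemma aeval_markoffQuad (a b c e : ℤ) (y : ℝ) : aeval y (markoffQuad a b c e) =
    a * y ^ 2 + (3 * e * a - 2 * b) * y + (c - 3 * e * b) := by
  simp [markoffQuad, map_ofNat]

namespace MarkoffRoots

variable {a b c e : ℤ} {θ θ' : ℝ}

lemma symm (h : MarkoffRoots a b c e θ θ') : MarkoffRoots a b c e θ' θ where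
  sign := h.sign
  det := h.det
  sum := by rw [add_comm, h.sum]
  prod := by rw [mul_comm θ', h.prod]

lemma aeval_eq_mul (h : MarkoffRoots a b c e θ θ') (y : ℝ) :
    aeval y (markoffQuad a b c e) = a * (y - θ) * (y - θ') := by
  rw [aeval_markoffQuad]
  linear_combination y * h.sum - h.prod

lemma unit_add_unit (h : MarkoffRoots a b c e θ θ') :
    markoffUnit a b e θ + markoffUnit a b e θ' = 3 * a := by
  simp only [markoffUnit]
  linear_combination (e : ℝ) * h.sum - 3 * a * h.sign

lemma unit_mul_unit (h : MarkoffRoots a b c e θ θ') :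
    markoffUnit a b e θ * markoffUnit a b e θ' = 1 := by
  simp only [markoffUnit]
  linear_combination e * (3 * a - e * b : ℝ) * h.sum + e * e * a * h.prod +
    (a * c - b * b - 9 * a * a) * h.sign + h.det

lemma unit_mul_self (h : MarkoffRoots a b c e θ θ') :
    markoffUnit a b e θ * markoffUnit a b e θ = 3 * a * markoffUnit a b e θ - 1 := by
  linear_combination markoffUnit a b e θ * h.unit_add_unit - h.unit_mul_unit

lemma root_mul_self (h : MarkoffRoots a b c e θ θ') :
    (a : ℝ) * (θ * θ) = (2 * b - 3 * e * a) * θ - (c - 3 * e * b) := by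
  linear_combination θ * h.sum - h.prod

lemma unit_mul_root (h : MarkoffRoots a b c e θ θ') :
    markoffUnit a b e θ * θ = 3 * b - e * c + e * b * θ := by
  rw [markoffUnit]
  linear_combination (e : ℝ) * h.root_mul_self + (3 * b - 3 * a * θ) * h.sign

/-- The order `ℤ + ℤ u` generated by the Markoff unit `u`, embedded in `ℝ × ℝ`. -/
def order (h : MarkoffRoots a b c e θ θ') : Subalgebra ℤ (ℝ × ℝ) where
  __ := conjLattice (markoffUnit a b e θ) (markoffUnit a b e θ')
  algebraMap_mem' m := by simpa using intCast_mem_conjLattice _ _ m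
  mul_mem' := by
    rintro ⟨v, v'⟩ ⟨w, w'⟩ hv hw
    obtain ⟨m, n, rfl, rfl⟩ := mem_conjLattice.1 hv
    obtain ⟨p, q, rfl, rfl⟩ := mem_conjLattice.1 hw
    refine mem_conjLattice.2 ⟨m * p - n * q, m * q + n * p + 3 * a * n * q, ?_, ?_⟩ <;> push_cast
    · linear_combination (n * q : ℝ) * h.unit_mul_self
    · linear_combination (n * q : ℝ) * h.symm.unit_mul_self

lemma mem_order (h : MarkoffRoots a b c e θ θ') {v v' : ℝ} :
    (v, v') ∈ h.order ↔
      ∃ m n : ℤ, v = m + n * markoffUnit a b e θ ∧ v' = m + n * markoffUnit a b e θ' :=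
  mem_conjLattice

lemma unit_mem_order (h : MarkoffRoots a b c e θ θ') :
    (markoffUnit a b e θ, markoffUnit a b e θ') ∈ h.order :=
  self_mem_conjLattice _ _

lemma unit_swap_mem_order (h : MarkoffRoots a b c e θ θ') :
    (markoffUnit a b e θ', markoffUnit a b e θ) ∈ h.order :=
  h.mem_order.2 ⟨3 * a, -1, by push_cast; linear_combination h.unit_add_unit,
    by push_cast; linear_combination h.unit_add_unit⟩

lemma unit_zpow_mem_order (h : MarkoffRoots a b c e θ θ') (i : ℤ) :
    (markoffUnit a b e θ ^ i, markoffUnit a b e θ' ^ i) ∈ h.order := by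
  have hinv : markoffUnit a b e θ' = (markoffUnit a b e θ)⁻¹ :=
    eq_inv_of_mul_eq_one_right h.unit_mul_unit
  obtain ⟨n, rfl | rfl⟩ := i.eq_nat_or_neg
  · simpa using pow_mem h.unit_mem_order n
  · simpa [hinv] using pow_mem h.unit_swap_mem_order n

lemma mul_root_mem_order (h : MarkoffRoots a b c e θ θ') :
    ((a : ℝ) * θ, (a : ℝ) * θ') ∈ h.order := by
  refine h.mem_order.2 ⟨b - 3 * e * a, e, ?_, ?_⟩ <;> simp only [markoffUnit] <;> push_cast
  · linear_combination (b - a * θ) * h.sign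
  · linear_combination (b - a * θ') * h.sign

lemma mul_mem_conjLattice (h : MarkoffRoots a b c e θ θ') {y z : ℝ × ℝ} (hy : y ∈ h.order)
    (hz : z ∈ conjLattice θ θ') : y * z ∈ conjLattice θ θ' := by
  obtain ⟨v, v'⟩ := y
  obtain ⟨w, w'⟩ := z
  obtain ⟨m, n, rfl, rfl⟩ := h.mem_order.1 hy
  obtain ⟨p, q, rfl, rfl⟩ := mem_conjLattice.1 hz
  refine mem_conjLattice.2 ⟨m * p + n * p * (3 * a - e * b) + n * q * (3 * b - e * c),
    m * q + n * p * (e * a) + n * q * (e * b), ?_, ?_⟩ <;> push_cast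
  · linear_combination (n * q : ℝ) * h.unit_mul_root + (n * p : ℝ) * markoffUnit.eq_1 a b e θ
  · linear_combination (n * q : ℝ) * h.symm.unit_mul_root + (n * p : ℝ) * markoffUnit.eq_1 a b e θ'

lemma aeval_mul_aeval_mem_order (h : MarkoffRoots a b c e θ θ') {m : ℕ} {G R : ℤ[X]}
    (hG : G.natDegree ≤ m) (hR : R.natDegree ≤ m) :
    ((a : ℝ) ^ m * aeval θ' G * aeval θ R, (a : ℝ) ^ m * aeval θ G * aeval θ' R) ∈ h.order := by
  have haθ' : (a : ℝ × ℝ) * (θ', θ) ∈ h.order := by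
    convert sub_mem (intCast_mem h.order (2 * b - 3 * e * a)) h.mul_root_mem_order using 1
    ext <;> simp <;> linear_combination h.sum
  have haθθ' : (a : ℝ × ℝ) * ((θ, θ') * (θ', θ)) ∈ h.order := by
    convert intCast_mem h.order (c - 3 * e * b) using 1
    ext
    · simpa using h.prod
    · simpa [mul_comm θ'] using h.prod
  convert pow_mul_aeval_mul_aeval_mem h.order (intCast_mem _ a) h.mul_root_mem_order haθ' haθθ'
    hG hR using 1
  simp [aeval_prod_apply, Prod.ext_iff]

lemma aeval_mul_aeval_mem_conjLattice (h : MarkoffRoots a b c e θ θ') {m : ℕ} {G R : ℤ[X]}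
    (hG : G.natDegree ≤ m) (hR : R.natDegree ≤ m + 1) :
    ((a : ℝ) ^ m * aeval θ' G * aeval θ R, (a : ℝ) ^ m * aeval θ G * aeval θ' R) ∈
      conjLattice θ θ' := by
  have hdivX : R.divX.natDegree ≤ m := by
    rw [natDegree_divX_eq_natDegree_tsub_one]
    omega
  have hlead := h.mul_mem_conjLattice (h.aeval_mul_aeval_mem_order hG hdivX)
    (self_mem_conjLattice θ θ')
  have hconst := h.mul_mem_conjLattice
    (h.aeval_mul_aeval_mem_order (R := C (R.coeff 0)) hG (by simp))
    (by simpa using intCast_mem_conjLattice θ θ' 1)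
  convert add_mem hlead hconst using 1
  conv_lhs => rw [← divX_mul_X_add R]
  ext <;> simp [mul_add, mul_assoc]

end MarkoffRoots

lemma primPart_dvd_of_map_dvd_map {K : Type*} [Field K] [CharZero K] {F R : ℤ[X]}
    (h : F.map (Int.castRingHom K) ∣ R.map (Int.castRingHom K)) : F.primPart ∣ R := by
  have hQ : F.map (Int.castRingHom ℚ) ∣ R.map (Int.castRingHom ℚ) := by
    rw [← map_dvd_map' (Rat.castHom K), Polynomial.map_map, Polynomial.map_map]
    rwa [RingHom.ext_int ((Rat.castHom K).comp (Int.castRingHom ℚ)) (Int.castRingHom K)]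
  rw [IsPrimitive.Int.dvd_iff_map_cast_dvd_map_cast _ _ F.isPrimitive_primPart]
  exact (Polynomial.map_dvd _ F.primPart_dvd).trans hQ

lemma content_markoffQuad_dvd_two {a b c : ℤ} (e : ℤ) (hdet : a * c - b * b = 1) :
    (markoffQuad a b c e).content ∣ 2 := by
  set g := (markoffQuad a b c e).content
  have hcoeff : ∀ i, g ∣ (markoffQuad a b c e).coeff i := fun _ => content_dvd_coeff _
  have ha : g ∣ a := by
    simpa [markoffQuad, coeff_X, coeff_C, coeff_X_pow, -eq_intCast] using hcoeff 2
  have hlin : g ∣ 3 * e * a - 2 * b := by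
    simpa [markoffQuad, coeff_X, coeff_C, coeff_X_pow, -eq_intCast] using hcoeff 1
  have hconst : g ∣ c - 3 * e * b := by
    simpa [markoffQuad, coeff_X, coeff_C, coeff_X_pow, -eq_intCast] using hcoeff 0
  have hb : g ∣ 2 * b := by
    rw [show 2 * b = 3 * e * a - (3 * e * a - 2 * b) by ring]
    exact dvd_sub (ha.mul_left (3 * e)) hlin
  have hc : g ∣ 2 * c := by
    rw [show 2 * c = 2 * (c - 3 * e * b) + 3 * e * (2 * b) by ring]
    exact dvd_add (hconst.mul_left 2) (hb.mul_left (3 * e))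
  have hsq : g ^ 2 ∣ 2 ^ 2 := by
    rw [sq, show (2 : ℤ) ^ 2 = 2 * a * (2 * c) - 2 * b * (2 * b) by linear_combination -4 * hdet]
    exact dvd_sub (mul_dvd_mul (ha.mul_left 2) hc) (mul_dvd_mul hb hb)
  exact (Int.pow_dvd_pow_iff two_ne_zero).1 hsq

namespace MarkoffRoots

variable {a b c e : ℤ} {θ θ' : ℝ}

lemma map_markoffQuad (h : MarkoffRoots a b c e θ θ') :
    (markoffQuad a b c e).map (Int.castRingHom ℝ) = C (a : ℝ) * ((X - C θ) * (X - C θ')) := by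
  refine Polynomial.funext fun y => ?_
  have h1 := h.aeval_eq_mul y
  rw [aeval_def, algebraMap_int_eq] at h1
  rw [eval_map, h1]
  simp [mul_assoc]

lemma exists_markoffQuad_mul_eq (h : MarkoffRoots a b c e θ θ') (ha : a ≠ 0) (hne : θ ≠ θ')
    {R : ℤ[X]} (hθ : aeval θ R = 0) (hθ' : aeval θ' R = 0) :
    ∃ A : ℤ[X], markoffQuad a b c e * A = C 2 * R := by
  set F := markoffQuad a b c e
  have hdvd : F.map (Int.castRingHom ℝ) ∣ R.map (Int.castRingHom ℝ) := by
    have hunit : IsUnit (C (a : ℝ)) := isUnit_C.2 (IsUnit.mk0 _ (Int.cast_ne_zero.2 ha))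
    have hcop : IsCoprime (X - C θ) (X - C θ') :=
      isCoprime_X_sub_C_of_isUnit_sub (IsUnit.mk0 _ (sub_ne_zero.2 hne))
    rw [h.map_markoffQuad, hunit.mul_left_dvd]
    refine hcop.mul_dvd ?_ ?_ <;> rwa [dvd_iff_isRoot, IsRoot, eval_map]
  obtain ⟨B, hB⟩ := primPart_dvd_of_map_dvd_map hdvd
  obtain ⟨g, hg⟩ := content_markoffQuad_dvd_two (a := a) (b := b) (c := c) e
    (by exact_mod_cast h.det)
  refine ⟨C g * B, ?_⟩
  calc F * (C g * B) = C F.content * F.primPart * (C g * B) := by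
        rw [← F.eq_C_content_mul_primPart]
    _ = C (F.content * g) * (F.primPart * B) := by rw [C_mul]; ring
    _ = C 2 * R := by rw [← hg, ← hB]

end MarkoffRoots

/-! ### Consecutive Markoff matrices -/

/-- Two consecutive symmetric matrices `((a, b), (b, c))` and `((a', b'), (b', c'))` of determinant
`1` in a Markoff sequence with sign `e`, and the upper left entry `a''` of the next matrix, their
twisted product; `comm` says that this product is symmetric. -/
structure MarkoffStep (a b c a' b' c' a'' e : ℤ) : Prop where
  sign : e * e = 1
  det : a * c - b * b = 1
  det' : a' * c' - b' * b' = 1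
  comm : a * c' + c * a' - 2 * b * b' = 3 * e * (b * a' - a * b')
  fst : a'' = 3 * a * a' - e * (b * a' - a * b')

namespace MarkoffStep

variable {a b c a' b' c' a'' e : ℤ}

lemma markoff_eq (h : MarkoffStep a b c a' b' c' a'' e) :
    a ^ 2 + a' ^ 2 + a'' ^ 2 = 3 * a * a' * a'' := by
  have hvalue : a * b' ^ 2 + (3 * e * a - 2 * b) * a' * b' + (c - 3 * e * b) * a' ^ 2 = -a := by
    linear_combination a' * h.comm - a * h.det'
  rw [h.fst]
  linear_combination a * hvalue - a' ^ 2 * h.det + (b * a' - a * b') ^ 2 * h.sign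

/-- The left side is the resultant of consecutive quadratics. It equals `(B ^ 2 - Δ Δ') / 4`, where
`Δ = 9 a ^ 2 - 4` and `Δ' = 9 a' ^ 2 - 4` are the discriminants and `B` is their polar form, so the
identity amounts to Markoff's equation. -/
lemma sq_mul_aeval_mul_aeval (h : MarkoffStep a b c a' b' c' a'' e) {θ θ' : ℝ}
    (h' : MarkoffRoots a' b' c' (-e) θ θ') :
    (a' : ℝ) ^ 2 * (aeval θ (markoffQuad a b c e) * aeval θ' (markoffQuad a b c e)) = -4 := by
  have hresultant (q r : ℝ) : 4 * ((a' : ℝ) ^ 2 *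
      ((a * θ ^ 2 + q * θ + r) * (a * θ' ^ 2 + q * θ' + r))) =
      (q * (a' * (θ + θ')) + 2 * a * (a' * (θ * θ')) + 2 * a' * r) ^ 2 -
        (q ^ 2 - 4 * a * r) * ((a' * (θ + θ')) ^ 2 - 4 * a' * (a' * (θ * θ'))) := by ring
  have hpolar : (3 * e * a - 2 * b) * (2 * b' + 3 * e * a') + 2 * a * (c' + 3 * e * b') +
      2 * a' * (c - 3 * e * b) = 6 * a'' - 9 * a * a' := by
    linear_combination 2 * h.comm - 6 * h.fst + 9 * a * a' * h.sign
  have hdisc : (3 * e * a - 2 * b) ^ 2 - 4 * a * (c - 3 * e * b) = 9 * a ^ 2 - 4 := by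
    linear_combination 9 * a ^ 2 * h.sign - 4 * h.det
  have hdisc' : (2 * b' + 3 * e * a') ^ 2 - 4 * a' * (c' + 3 * e * b') = 9 * a' ^ 2 - 4 := by
    linear_combination 9 * a' ^ 2 * h.sign - 4 * h.det'
  have hmarkoff := h.markoff_eq
  rify at hpolar hdisc hdisc' hmarkoff
  have hsum : (a' : ℝ) * (θ + θ') = 2 * b' + 3 * e * a' := by
    rw [h'.sum]; push_cast; ring
  have hprod : (a' : ℝ) * (θ * θ') = c' + 3 * e * b' := by
    rw [h'.prod]; push_cast; ring
  have hvalue := hresultant (3 * e * a - 2 * b) (c - 3 * e * b)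
  rw [hsum, hprod, hpolar, hdisc, hdisc'] at hvalue
  rw [aeval_markoffQuad, aeval_markoffQuad]
  linear_combination hvalue / 4 + 9 * hmarkoff

end MarkoffStep

/-- The square root of the normalised discriminant `1 - 4 / (9 a ^ 2)`. -/
noncomputable def discSqrt (a : ℤ) : ℝ := √(1 - 4 / (9 * (a : ℝ) ^ 2))

/-- The root of `markoffQuad a b c e` close to `b / a`. -/
noncomputable def nearRoot (a b e : ℤ) : ℝ := b / a - 3 * e / 2 * (1 - discSqrt a)

/-- The root of `markoffQuad a b c e` close to `b / a - 3 e`. -/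
noncomputable def farRoot (a b e : ℤ) : ℝ := b / a - 3 * e / 2 * (1 + discSqrt a)

section Roots

variable {a b c e : ℤ}

lemma discSqrt_nonneg (a : ℤ) : 0 ≤ discSqrt a := Real.sqrt_nonneg _

lemma discSqrt_le_one (a : ℤ) : discSqrt a ≤ 1 :=
  Real.sqrt_le_one.2 (sub_le_self _ (by positivity))

lemma four_div_nine_mul_sq_le_one (ha : a ≠ 0) : 4 / (9 * (a : ℝ) ^ 2) ≤ 1 := by
  have hsq : (1 : ℝ) ≤ (a : ℝ) ^ 2 := by exact_mod_cast (by positivity : 0 < a ^ 2)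
  rw [div_le_one (by positivity)]
  linarith

lemma one_sub_discSqrt_le (ha : a ≠ 0) : 1 - discSqrt a ≤ 4 / (9 * (a : ℝ) ^ 2) := by
  have hle : 1 - 4 / (9 * (a : ℝ) ^ 2) ≤ discSqrt a :=
    Real.le_sqrt_of_sq_le <| pow_le_of_le_one (sub_nonneg.2 (four_div_nine_mul_sq_le_one ha))
      (sub_le_self _ (by positivity)) two_ne_zero
  linarith

lemma markoffRoots_nearRoot_farRoot (ha : a ≠ 0) (hsign : e * e = 1) (hdet : a * c - b * b = 1) :
    MarkoffRoots a b c e (nearRoot a b e) (farRoot a b e) := by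
  have ha' : (a : ℝ) ≠ 0 := Int.cast_ne_zero.2 ha
  have hsign' : (e : ℝ) * e = 1 := by exact_mod_cast hsign
  have hdet' : (a : ℝ) * c - b * b = 1 := by exact_mod_cast hdet
  have hdisc : (a : ℝ) ^ 2 * discSqrt a ^ 2 = a ^ 2 - 4 / 9 := by
    rw [discSqrt, Real.sq_sqrt (sub_nonneg.2 (four_div_nine_mul_sq_le_one ha))]
    field_simp
  refine ⟨hsign', hdet', ?_, ?_⟩
  · rw [nearRoot, farRoot]
    field_simp
    ring
  · rw [nearRoot, farRoot]
    field_simp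
    linear_combination (-9 * e ^ 2 : ℝ) * hdisc - 4 * hdet' + 4 * hsign'

lemma abs_three_halves_mul_one_sub_discSqrt_le (ha : a ≠ 0) (hsign : e * e = 1) :
    |3 * (e : ℝ) / 2 * (1 - discSqrt a)| ≤ 1 / (a : ℝ) ^ 2 := by
  have hone : |(e : ℝ)| = 1 := by
    rcases mul_self_eq_one_iff.1 hsign with rfl | rfl <;> norm_num
  have hle := one_sub_discSqrt_le ha
  have hpos : 0 ≤ 1 / (a : ℝ) ^ 2 := by positivity
  have heq : 4 / (9 * (a : ℝ) ^ 2) = 4 / 9 * (1 / (a : ℝ) ^ 2) := by ring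
  rw [abs_mul, abs_div, abs_mul, hone, abs_of_nonneg (sub_nonneg.2 (discSqrt_le_one a))]
  norm_num only [abs_of_pos]
  linarith

lemma abs_nearRoot_sub_le (ha : a ≠ 0) (hsign : e * e = 1) :
    |nearRoot a b e - b / a| ≤ 1 / (a : ℝ) ^ 2 := by
  rw [nearRoot, sub_sub_cancel_left, abs_neg]
  exact abs_three_halves_mul_one_sub_discSqrt_le ha hsign

lemma abs_farRoot_sub_le (ha : a ≠ 0) (hsign : e * e = 1) :
    |farRoot a b e - (b / a - 3 * e)| ≤ 1 / (a : ℝ) ^ 2 := by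
  have heq : farRoot a b e - (b / a - 3 * e) = 3 * e / 2 * (1 - discSqrt a) := by
    rw [farRoot]
    ring
  rw [heq]
  exact abs_three_halves_mul_one_sub_discSqrt_le ha hsign

lemma markoffUnit_nearRoot (b : ℤ) (ha : a ≠ 0) (hsign : e * e = 1) :
    markoffUnit a b e (nearRoot a b e) = 3 / 2 * (1 + discSqrt a) * a := by
  have ha' : (a : ℝ) ≠ 0 := Int.cast_ne_zero.2 ha
  have hsign' : (e : ℝ) * e = 1 := by exact_mod_cast hsign
  rw [markoffUnit, nearRoot]
  field_simp
  linear_combination (-3 * a * (1 - discSqrt a)) * hsign'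

lemma abs_le_abs_markoffUnit_nearRoot (b : ℤ) (ha : a ≠ 0) (hsign : e * e = 1) :
    |(a : ℝ)| ≤ |markoffUnit a b e (nearRoot a b e)| := by
  have hone : 1 ≤ |3 / 2 * (1 + discSqrt a)| := by
    rw [abs_of_nonneg] <;> linarith [discSqrt_nonneg a]
  rw [markoffUnit_nearRoot b ha hsign, abs_mul]
  exact le_mul_of_one_le_left (abs_nonneg _) hone

lemma abs_markoffUnit_nearRoot_le (b : ℤ) (ha : a ≠ 0) (hsign : e * e = 1) :
    |markoffUnit a b e (nearRoot a b e)| ≤ 3 * |(a : ℝ)| := by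
  have hthree : |3 / 2 * (1 + discSqrt a)| ≤ 3 := by
    rw [abs_of_nonneg] <;> linarith [discSqrt_nonneg a, discSqrt_le_one a]
  rw [markoffUnit_nearRoot b ha hsign, abs_mul]
  exact mul_le_mul_of_nonneg_right hthree (abs_nonneg _)

end Roots

/-! ### Heights in a Markoff sequence -/

/-- The logarithm of the height `X_k` of the `k`-th matrix. -/
noncomputable def logHeight (x : ℕ → Matrix (Fin 2) (Fin 2) ℤ) (k : ℕ) : ℝ := Real.log (Xnorm x k)

lemma abs_entry_le_Xnorm (x : ℕ → Matrix (Fin 2) (Fin 2) ℤ) (k : ℕ) :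
    |(x k 0 0 : ℝ)| ≤ Xnorm x k := le_max_left _ _

lemma exists_Xnorm_eq_intCast (x : ℕ → Matrix (Fin 2) (Fin 2) ℤ) (k : ℕ) :
    ∃ n : ℤ, Xnorm x k = n :=
  ⟨max |x k 0 0| (max |x k 0 1| |x k 1 1|), by simp [Xnorm]⟩

namespace MarkoffSeq

variable {ξ : ℝ} {x : ℕ → Matrix (Fin 2) (Fin 2) ℤ} {k : ℕ}

lemma det_entries (hx : MarkoffSeq ξ x) (hk : 1 ≤ k) :
    x k 0 0 * x k 1 1 - x k 0 1 * x k 0 1 = 1 := by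
  rw [← hx.2.1 k hk, Matrix.det_fin_two, ← hx.1 k hk]

lemma step (hx : MarkoffSeq ξ x) (hk : 1 ≤ k) :
    MarkoffStep (x k 0 0) (x k 0 1) (x k 1 1) (x (k + 1) 0 0) (x (k + 1) 0 1) (x (k + 1) 1 1)
      (x (k + 2) 0 0) ((-1) ^ k) := by
  have hsign : ((-1 : ℤ) ^ k) * (-1) ^ k = 1 := by rw [← mul_pow]; norm_num
  obtain ⟨_, _, _, -, -, -, h⟩ := hx.2.2
  have hprod := (h k hk).2.2.1.2
  have h00 := congrFun (congrFun hprod 0) 0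
  have h01 := congrFun (congrFun hprod 0) 1
  have h10 := congrFun (congrFun hprod 1) 0
  simp only [Matrix.mul_apply, Fin.sum_univ_two, Mmat, Matrix.of_apply, Matrix.cons_val',
    Matrix.cons_val_zero, Matrix.cons_val_one, Matrix.cons_val_fin_one, pow_succ, ← hx.1 k hk,
    ← hx.1 (k + 1) (by lia), ← hx.1 (k + 2) (by lia)] at h00 h01 h10
  refine ⟨hsign, hx.det_entries hk, hx.det_entries (by lia), ?_, ?_⟩
  · linear_combination (-1 : ℤ) ^ k * (h10 - h01) - (x k 0 0 * x (k + 1) 1 1 +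
      x k 1 1 * x (k + 1) 0 0 - 2 * x k 0 1 * x (k + 1) 0 1) * hsign
  · linear_combination h00

lemma Xnorm_lt (hx : MarkoffSeq ξ x) (hk : 1 ≤ k) :
    Xnorm x k < (1 + ξ ^ 2) * |(x k 0 0 : ℝ)| := by
  obtain ⟨_, _, _, -, -, -, h⟩ := hx.2.2
  exact (h k hk).2.2.2.2

lemma Xnorm_lt_succ (hx : MarkoffSeq ξ x) (hk : 1 ≤ k) : Xnorm x k < Xnorm x (k + 1) := by
  obtain ⟨_, _, _, -, -, -, h⟩ := hx.2.2
  exact (h k hk).2.2.2.1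

lemma entry_ne_zero (hx : MarkoffSeq ξ x) (hk : 1 ≤ k) : x k 0 0 ≠ 0 := by
  intro h0
  have hlt := (abs_entry_le_Xnorm x k).trans_lt (hx.Xnorm_lt hk)
  simp [h0] at hlt

lemma one_le_Xnorm (hx : MarkoffSeq ξ x) (hk : 1 ≤ k) : 1 ≤ Xnorm x k :=
  le_trans (by exact_mod_cast Int.one_le_abs (hx.entry_ne_zero hk)) (abs_entry_le_Xnorm x k)

lemma natCast_le_Xnorm (hx : MarkoffSeq ξ x) (hk : 1 ≤ k) : (k : ℝ) ≤ Xnorm x k := by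
  induction k, hk using Nat.le_induction with
  | base => simpa using hx.one_le_Xnorm le_rfl
  | succ k hk ih =>
    have hlt := hx.Xnorm_lt_succ hk
    obtain ⟨m, hm⟩ := exists_Xnorm_eq_intCast x k
    obtain ⟨n, hn⟩ := exists_Xnorm_eq_intCast x (k + 1)
    rw [hm] at ih hlt
    rw [hn] at hlt ⊢
    exact_mod_cast (show (k : ℤ) + 1 ≤ n by
      have : (k : ℤ) ≤ m := by exact_mod_cast ih
      have : m < n := by exact_mod_cast hlt
      lia)

lemma tendsto_logHeight (hx : MarkoffSeq ξ x) : Tendsto (logHeight x) atTop atTop := by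
  refine Real.tendsto_log_atTop.comp (tendsto_atTop_mono' _ ?_ tendsto_natCast_atTop_atTop)
  filter_upwards [eventually_ge_atTop 1] with k hk using hx.natCast_le_Xnorm hk

lemma logHeight_lt_succ (hx : MarkoffSeq ξ x) (hk : 1 ≤ k) : logHeight x k < logHeight x (k + 1) :=
  Real.log_lt_log (by linarith [hx.one_le_Xnorm hk]) (hx.Xnorm_lt_succ hk)

lemma exists_abs_logHeight_succ_sub_le (hx : MarkoffSeq ξ x) : ∃ K : ℝ, ∀ k, 1 ≤ k →
    |logHeight x (k + 1) - gold * logHeight x k| ≤ K := by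
  obtain ⟨c₁, c₂, _, h1, h2, -, h⟩ := hx.2.2
  refine ⟨max |Real.log c₁| |Real.log c₂|, fun k hk => ?_⟩
  have hX0 : 0 < Xnorm x k := by linarith [hx.one_le_Xnorm hk]
  have hp : 0 < Xnorm x k ^ gold := Real.rpow_pos_of_pos hX0 _
  obtain ⟨hl, hu⟩ := (h k hk).1
  have hl' := Real.log_le_log (by positivity) hl
  have hu' := Real.log_le_log (by linarith [hx.Xnorm_lt_succ hk]) hu
  rw [Real.log_mul h1.ne' hp.ne', Real.log_rpow hX0] at hl'
  rw [Real.log_mul h2.ne' hp.ne', Real.log_rpow hX0] at hu'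
  rw [logHeight, logHeight, abs_le]
  constructor
  · linarith [neg_abs_le (Real.log c₁), le_max_left |Real.log c₁| |Real.log c₂|]
  · linarith [le_abs_self (Real.log c₂), le_max_right |Real.log c₁| |Real.log c₂|]

lemma exists_le_logHeight_le (hx : MarkoffSeq ξ x) : ∃ K : ℝ, ∀ s, 0 ≤ s →
    ∃ k, 1 ≤ k ∧ s ≤ logHeight x k ∧ logHeight x k ≤ gold * s + K := by
  obtain ⟨K, hK⟩ := hx.exists_abs_logHeight_succ_sub_le
  refine ⟨max K (logHeight x 1), fun s hs => ?_⟩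
  rcases le_or_gt s (logHeight x 1) with h1 | h1
  · have := mul_nonneg (by linarith [lt_gold] : 0 ≤ gold) hs
    exact ⟨1, le_rfl, h1, by linarith [le_max_right K (logHeight x 1)]⟩
  · obtain ⟨n, hn, hn'⟩ := StrictMono.exists_between_of_tendsto_atTop
      (strictMono_nat_of_lt_succ fun k => hx.logHeight_lt_succ (k := k + 1) (by lia))
      (hx.tendsto_logHeight.comp (tendsto_add_atTop_nat 1)) h1
    have := mul_le_mul_of_nonneg_left hn.le (by linarith [lt_gold] : 0 ≤ gold)
    have := (abs_le.1 (hK (n + 1) (by lia))).2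
    exact ⟨n + 1 + 1, by lia, hn', by linarith [le_max_left K (logHeight x 1)]⟩

/-- The integer `m a_k + n b_k` is nonzero, since `a_k` is prime to `b_k` and larger than `|n|`. -/
lemma exists_one_div_le_abs_add_mul (hx : MarkoffSeq ξ x) : ∃ M : ℝ, 1 ≤ M ∧ ∀ k, 1 ≤ k →
    ∀ m n : ℤ, n ≠ 0 → M * |(n : ℝ)| ≤ Xnorm x k → 1 / (2 * Xnorm x k) ≤ |(m : ℝ) + n * ξ| := by
  obtain ⟨_, _, c₃, -, -, h3, h⟩ := hx.2.2
  refine ⟨2 * c₃ + (1 + ξ ^ 2), by nlinarith [sq_nonneg ξ], fun k hk m n hn hMn => ?_⟩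
  have hX := hx.one_le_Xnorm hk
  have hn1 : 1 ≤ |(n : ℝ)| := by exact_mod_cast Int.one_le_abs hn
  have hne : x k 0 0 * m + n * x k 0 1 ≠ 0 := by
    intro h0
    have hcop : IsCoprime (x k 0 0) (x k 0 1) :=
      ⟨x k 1 1, -x k 0 1, by linear_combination hx.det_entries hk⟩
    have hdvd : x k 0 0 ∣ n := hcop.dvd_of_dvd_mul_right ⟨-m, by linear_combination h0⟩
    have hle : |(x k 0 0 : ℝ)| ≤ |(n : ℝ)| := by
      exact_mod_cast Int.le_of_dvd (abs_pos.2 hn) ((abs_dvd_abs _ _).2 hdvd)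
    nlinarith [hx.Xnorm_lt hk, sq_nonneg ξ]
  have hone : (1 : ℝ) ≤ |(x k 0 0 : ℝ) * m + n * x k 0 1| := by exact_mod_cast Int.one_le_abs hne
  have herror : |(n : ℝ) * (x k 0 0 * ξ - x k 0 1)| ≤ 1 / 2 := by
    rw [abs_mul]
    calc _ ≤ |(n : ℝ)| * (c₃ / Xnorm x k) := by gcongr; exact (h k hk).2.1.1
      _ ≤ 1 / 2 := by
        rw [← mul_div_assoc, div_le_div_iff₀ (by linarith) (by norm_num)]
        nlinarith [sq_nonneg ξ]
  have hhalf : 1 / 2 ≤ |(x k 0 0 : ℝ)| * |(m : ℝ) + n * ξ| := by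
    rw [← abs_mul, show (x k 0 0 : ℝ) * (m + n * ξ) =
      (x k 0 0 * m + n * x k 0 1) + n * (x k 0 0 * ξ - x k 0 1) by ring]
    have := abs_sub_abs_le_abs_add ((x k 0 0 : ℝ) * m + n * x k 0 1) (n * (x k 0 0 * ξ - x k 0 1))
    linarith
  rw [div_le_iff₀ (by linarith)]
  nlinarith [abs_nonneg ((m : ℝ) + n * ξ), abs_entry_le_Xnorm x k]

lemma exists_exp_le_abs_add_mul (hx : MarkoffSeq ξ x) : ∃ K : ℝ, ∀ (m n : ℤ) (s : ℝ), n ≠ 0 →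
    |(n : ℝ)| ≤ Real.exp s → Real.exp (-K - gold * s) ≤ |(m : ℝ) + n * ξ| := by
  obtain ⟨M, hM, hform⟩ := hx.exists_one_div_le_abs_add_mul
  obtain ⟨K, hK⟩ := hx.exists_le_logHeight_le
  refine ⟨Real.log 2 + K + gold * Real.log M, fun m n s hn hns => ?_⟩
  have hs : 0 ≤ s := Real.exp_le_exp.1 <| by
    rw [Real.exp_zero]; exact le_trans (by exact_mod_cast Int.one_le_abs hn) hns
  obtain ⟨k, hk, hlow, hup⟩ := hK (Real.log M + s) (add_nonneg (Real.log_nonneg hM) hs)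
  have hX : 0 < Xnorm x k := by linarith [hx.one_le_Xnorm hk]
  refine le_trans ?_ (hform k hk m n hn ?_)
  · rw [← Real.log_le_log_iff (Real.exp_pos _) (by positivity), Real.log_exp, one_div,
      Real.log_inv, Real.log_mul two_ne_zero hX.ne', ← logHeight]
    linarith
  · calc M * |(n : ℝ)| ≤ Real.exp (Real.log M) * Real.exp s := by
          rw [Real.exp_log (by linarith)]; gcongr
      _ = Real.exp (Real.log M + s) := (Real.exp_add _ _).symm
      _ ≤ Real.exp (logHeight x k) := Real.exp_le_exp.2 hlow
      _ = Xnorm x k := Real.exp_log hX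

end MarkoffSeq

/-- The matrices `x k` approximate `ξ` with logarithmic error `K`, every height being large in
terms of `K`. The constant in `absorb` dominates those in the bounds for the values, first and
second differences of a polynomial of degree at most `6` within `20` of `ξ`. -/
structure MarkoffApprox (ξ K : ℝ) (x : ℕ → Matrix (Fin 2) (Fin 2) ℤ) : Prop where
  one_le : 1 ≤ K
  absorb : 252 * (|ξ| + 20) ^ 6 ≤ Real.exp K
  large : ∀ k, 1000000 * K ≤ logHeight x k
  step : ∀ k, MarkoffStep (x k 0 0) (x k 0 1) (x k 1 1) (x (k + 1) 0 0) (x (k + 1) 0 1)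
    (x (k + 1) 1 1) (x (k + 2) 0 0) ((-1) ^ k)
  growth : ∀ k, |logHeight x (k + 1) - gold * logHeight x k| ≤ K
  entry : ∀ k, HasLogSize K (x k 0 0) (logHeight x k)
  convergent : ∀ k, |(x k 0 1 / x k 0 0 : ℝ) - ξ| ≤ Real.exp (K - 2 * logHeight x k)
  irrational : ∀ (m n : ℤ) (s : ℝ), n ≠ 0 → |(n : ℝ)| ≤ Real.exp s →
    Real.exp (-K - gold * s) ≤ |(m : ℝ) + n * ξ|

namespace MarkoffSeq

variable {ξ : ℝ} {x : ℕ → Matrix (Fin 2) (Fin 2) ℤ}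

lemma hasLogSize_entry (hx : MarkoffSeq ξ x) {k : ℕ} (hk : 1 ≤ k) :
    HasLogSize (Real.log (1 + ξ ^ 2)) (x k 0 0) (logHeight x k) := by
  have hX : 0 < Xnorm x k := by linarith [hx.one_le_Xnorm hk]
  have hξ : 0 < 1 + ξ ^ 2 := by positivity
  have hlog : 0 ≤ Real.log (1 + ξ ^ 2) := Real.log_nonneg (by nlinarith [sq_nonneg ξ])
  refine hasLogSize_of_le_of_le ?_ ?_
  · rw [Real.exp_sub, logHeight, Real.exp_log hX, Real.exp_log hξ, div_le_iff₀' hξ]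
    exact (hx.Xnorm_lt hk).le
  · refine (abs_entry_le_Xnorm x k).trans ?_
    rw [← Real.exp_log hX, ← logHeight]
    exact Real.exp_le_exp.2 (by linarith)

lemma exists_abs_convergent_sub_le (hx : MarkoffSeq ξ x) : ∃ K : ℝ, ∀ k, 1 ≤ k →
    |(x k 0 1 / x k 0 0 : ℝ) - ξ| ≤ Real.exp (K - 2 * logHeight x k) := by
  obtain ⟨_, _, c₃, -, -, h3, h⟩ := hx.2.2
  refine ⟨Real.log c₃ + Real.log (1 + ξ ^ 2), fun k hk => ?_⟩
  have hX : 0 < Xnorm x k := by linarith [hx.one_le_Xnorm hk]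
  have hentry := (hx.hasLogSize_entry hk).exp_le_abs
  have ha : (x k 0 0 : ℝ) ≠ 0 := (hx.hasLogSize_entry hk).ne_zero
  calc |(x k 0 1 / x k 0 0 : ℝ) - ξ| = |(x k 0 0 : ℝ) * ξ - x k 0 1| / |(x k 0 0 : ℝ)| := by
        rw [← abs_div, abs_sub_comm, sub_div, mul_div_cancel_left₀ _ ha]
    _ ≤ (c₃ / Xnorm x k) / Real.exp (logHeight x k - Real.log (1 + ξ ^ 2)) := by
        gcongr
        exact (h k hk).2.1.1
    _ = Real.exp (Real.log c₃ - logHeight x k) /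
          Real.exp (logHeight x k - Real.log (1 + ξ ^ 2)) := by
        rw [Real.exp_sub (Real.log c₃), Real.exp_log h3, logHeight, Real.exp_log hX]
    _ = Real.exp (Real.log c₃ + Real.log (1 + ξ ^ 2) - 2 * logHeight x k) := by
        rw [← Real.exp_sub]
        ring_nf

/-- The shift is even so that the signs `(-1) ^ k` are unchanged. -/
lemma exists_markoffApprox_shift (hx : MarkoffSeq ξ x) :
    ∃ (K : ℝ) (n : ℕ), MarkoffApprox ξ K fun k => x (k + 2 * n) := by
  obtain ⟨K₁, hgrowth⟩ := hx.exists_abs_logHeight_succ_sub_le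
  obtain ⟨K₂, hconv⟩ := hx.exists_abs_convergent_sub_le
  obtain ⟨K₃, hirr⟩ := hx.exists_exp_le_abs_add_mul
  obtain ⟨K, hK⟩ : ∃ K, ∀ y ∈ ({1, Real.log (252 * (|ξ| + 20) ^ 6), Real.log (1 + ξ ^ 2), K₁, K₂,
      K₃} : Finset ℝ), y ≤ K := Finset.exists_le _
  simp only [Finset.mem_insert, Finset.mem_singleton, forall_eq_or_imp, forall_eq] at hK
  obtain ⟨hone, habsorb, hentry, h1, h2, h3⟩ := hK
  obtain ⟨N, hN⟩ := eventually_atTop.1 (hx.tendsto_logHeight.eventually_ge_atTop (1000000 * K))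
  refine ⟨K, N + 1, hone, ?_, fun k => hN _ (by lia), fun k => ?_, fun k => ?_,
    fun k => (hx.hasLogSize_entry (by lia)).mono hentry,
    fun k => (hconv _ (by lia)).trans ?_, fun m n s hn hs => le_trans ?_ (hirr m n s hn hs)⟩
  · rwa [← Real.log_le_iff_le_exp (by positivity)]
  · have hsign : (-1 : ℤ) ^ (k + 2 * (N + 1)) = (-1) ^ k := by rw [pow_add, pow_mul]; norm_num
    have h := hx.step (k := k + 2 * (N + 1)) (by lia)
    rwa [hsign, add_right_comm k _ 1, add_right_comm k _ 2] at h
  · have h := hgrowth (k + 2 * (N + 1)) (by lia)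
    rw [add_right_comm k _ 1] at h
    exact h.trans h1
  · exact Real.exp_le_exp.2 (by simpa only [logHeight, Xnorm] using sub_le_sub_right h2 _)
  · exact Real.exp_le_exp.2 (by linarith)

end MarkoffSeq

/-! ### Sizes of roots and values -/

section Sequences

variable (x : ℕ → Matrix (Fin 2) (Fin 2) ℤ) (k : ℕ)

/-- The quadratic polynomial `F_k` attached to the `k`-th matrix. -/
noncomputable def quadSeq : ℤ[X] := markoffQuad (x k 0 0) (x k 0 1) (x k 1 1) ((-1) ^ k)

/-- The root `α_k` of `F_k` close to `ξ`. -/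
noncomputable def nearSeq : ℝ := nearRoot (x k 0 0) (x k 0 1) ((-1) ^ k)

/-- The root `β_k` of `F_k` close to `ξ - 3 (-1) ^ k`. -/
noncomputable def farSeq : ℝ := farRoot (x k 0 0) (x k 0 1) ((-1) ^ k)

/-- The unit `u_k` of trace `3 a_k` attached to the root `α_k`; its size is that of `a_k`. -/
noncomputable def unitSeq : ℝ := markoffUnit (x k 0 0) (x k 0 1) ((-1) ^ k) (nearSeq x k)

end Sequences

namespace MarkoffApprox

variable {ξ K : ℝ} {x : ℕ → Matrix (Fin 2) (Fin 2) ℤ}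

lemma le_logHeight_succ (h : MarkoffApprox ξ K x) (k : ℕ) :
    1.6179 * logHeight x k ≤ logHeight x (k + 1) := by
  have := (abs_le.1 (h.growth k)).1
  have := h.large k
  nlinarith [h.one_le, lt_gold]

lemma logHeight_succ_le (h : MarkoffApprox ξ K x) (k : ℕ) :
    logHeight x (k + 1) ≤ 1.6191 * logHeight x k := by
  have := (abs_le.1 (h.growth k)).2
  have := h.large k
  nlinarith [h.one_le, gold_lt]

lemma abs_logHeight_add_two_sub_le (h : MarkoffApprox ξ K x) (k : ℕ) :
    |logHeight x (k + 2) - logHeight x (k + 1) - logHeight x k| ≤ 2 * K := by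
  have heq : logHeight x (k + 2) - logHeight x (k + 1) - logHeight x k =
      (logHeight x (k + 2) - gold * logHeight x (k + 1)) +
        (gold - 1) * (logHeight x (k + 1) - gold * logHeight x k) := by
    linear_combination logHeight x k * gold_sq
  have hle : (gold - 1) * |logHeight x (k + 1) - gold * logHeight x k| ≤ 1 * K :=
    mul_le_mul (by linarith [gold_lt]) (h.growth k) (abs_nonneg _) zero_le_one
  rw [heq]
  refine (abs_add_le _ _).trans ?_
  rw [abs_mul, abs_of_pos (by linarith [lt_gold] : 0 < gold - 1)]
  linarith [h.growth (k + 1)]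

lemma entry_ne_zero (h : MarkoffApprox ξ K x) (k : ℕ) : x k 0 0 ≠ 0 :=
  Int.cast_ne_zero.1 (h.entry k).ne_zero

lemma roots (h : MarkoffApprox ξ K x) (k : ℕ) : MarkoffRoots (x k 0 0) (x k 0 1) (x k 1 1)
    ((-1) ^ k) (nearSeq x k) (farSeq x k) :=
  markoffRoots_nearRoot_farRoot (h.entry_ne_zero k) (h.step k).sign (h.step k).det

lemma aeval_quadSeq (h : MarkoffApprox ξ K x) (k : ℕ) (y : ℝ) :
    aeval y (quadSeq x k) = x k 0 0 * (y - nearSeq x k) * (y - farSeq x k) :=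
  (h.roots k).aeval_eq_mul y

lemma hasLogSize_unitSeq (h : MarkoffApprox ξ K x) (k : ℕ) :
    HasLogSize (3 * K) (unitSeq x k) (logHeight x k) := by
  have hK := h.one_le
  have hl := abs_le_abs_markoffUnit_nearRoot (x k 0 1) (h.entry_ne_zero k) (h.step k).sign
  have hu := abs_markoffUnit_nearRoot_le (x k 0 1) (h.entry_ne_zero k) (h.step k).sign
  refine hasLogSize_of_le_of_le
    ((Real.exp_le_exp.2 (by linarith)).trans ((h.entry k).exp_le_abs.trans hl)) (hu.trans ?_)
  calc 3 * |(x k 0 0 : ℝ)| ≤ Real.exp (2 * K) * Real.exp (logHeight x k + K) := by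
        gcongr
        · linarith [Real.add_one_le_exp (2 * K)]
        · exact (h.entry k).abs_le_exp
    _ = Real.exp (logHeight x k + 3 * K) := by rw [← Real.exp_add]; ring_nf

lemma abs_convergent_sub_add_le (h : MarkoffApprox ξ K x) (k : ℕ) :
    |(x k 0 1 / x k 0 0 : ℝ) - ξ| + 1 / (x k 0 0 : ℝ) ^ 2 ≤
      Real.exp (3 * K - 2 * logHeight x k) := by
  have hK := h.one_le
  have hsq := ((h.entry k).pow 2).inv.abs_le_exp
  rw [abs_of_pos (by have := (h.entry k).ne_zero; positivity), ← one_div] at hsq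
  exact (add_le_add (h.convergent k) hsq).trans
    (exp_add_exp_le (by linarith) (by push_cast; linarith))

lemma abs_nearSeq_sub_le_exp (h : MarkoffApprox ξ K x) (k : ℕ) :
    |nearSeq x k - ξ| ≤ Real.exp (3 * K - 2 * logHeight x k) := by
  have hroot := abs_nearRoot_sub_le (b := x k 0 1) (h.entry_ne_zero k) (h.step k).sign
  linarith [abs_sub_le (nearSeq x k) (x k 0 1 / x k 0 0 : ℝ) ξ, h.abs_convergent_sub_add_le k,
    show |nearSeq x k - x k 0 1 / x k 0 0| ≤ _ from hroot]

lemma abs_farSeq_sub_le_exp (h : MarkoffApprox ξ K x) (k : ℕ) :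
    |farSeq x k - (ξ - 3 * (-1) ^ k)| ≤ Real.exp (3 * K - 2 * logHeight x k) := by
  have hroot := abs_farRoot_sub_le (b := x k 0 1) (h.entry_ne_zero k) (h.step k).sign
  push_cast at hroot
  have htri := abs_sub_le (farSeq x k) (x k 0 1 / x k 0 0 - 3 * (-1) ^ k : ℝ) (ξ - 3 * (-1) ^ k)
  rw [sub_sub_sub_cancel_right] at htri
  linarith [h.abs_convergent_sub_add_le k,
    show |farSeq x k - (x k 0 1 / x k 0 0 - 3 * (-1) ^ k : ℝ)| ≤ _ from hroot]

lemma exp_le_one_div_ten (h : MarkoffApprox ξ K x) (k : ℕ) :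
    Real.exp (3 * K - 2 * logHeight x k) ≤ 1 / 10 := by
  have hten : (10 : ℝ) ≤ Real.exp 9 := by linarith [Real.add_one_le_exp 9]
  calc Real.exp (3 * K - 2 * logHeight x k) ≤ Real.exp (-9) :=
        Real.exp_le_exp.2 (by linarith [h.large k, h.one_le])
    _ = 1 / Real.exp 9 := by rw [Real.exp_neg, one_div]
    _ ≤ 1 / 10 := by gcongr

lemma abs_nearSeq_sub_le (h : MarkoffApprox ξ K x) (k : ℕ) : |nearSeq x k - ξ| ≤ 1 / 10 :=
  (h.abs_nearSeq_sub_le_exp k).trans (h.exp_le_one_div_ten k)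

lemma abs_farSeq_sub_le (h : MarkoffApprox ξ K x) (k : ℕ) :
    |farSeq x k - (ξ - 3 * (-1) ^ k)| ≤ 1 / 10 :=
  (h.abs_farSeq_sub_le_exp k).trans (h.exp_le_one_div_ten k)

lemma one_le_abs_sub_farSeq (h : MarkoffApprox ξ K x) (k : ℕ) {y : ℝ} (hy : |y - ξ| ≤ 1 / 10) :
    1 ≤ |y - farSeq x k| := by
  have hfar := abs_le.1 (h.abs_farSeq_sub_le k)
  have hnear := abs_le.1 hy
  rw [le_abs]
  rcases neg_one_pow_eq_or ℝ k with hk | hk <;> rw [hk] at hfar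
  · exact Or.inl (by linarith)
  · exact Or.inr (by linarith)

lemma abs_farSeq_sub_le_four (h : MarkoffApprox ξ K x) (k : ℕ) : |farSeq x k - ξ| ≤ 4 := by
  have hfar := abs_le.1 (h.abs_farSeq_sub_le k)
  rw [abs_le]
  rcases neg_one_pow_eq_or ℝ k with hk | hk <;> rw [hk] at hfar <;> constructor <;> linarith

lemma hasLogSize_sub_farSeq (h : MarkoffApprox ξ K x) (k : ℕ) {y : ℝ} (hy : |y - ξ| ≤ 1 / 10) :
    HasLogSize 3 (y - farSeq x k) 0 := by
  refine hasLogSize_three_zero (h.one_le_abs_sub_farSeq k hy) ?_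
  have htri := abs_sub_le y ξ (farSeq x k)
  rw [abs_sub_comm ξ] at htri
  linarith [h.abs_farSeq_sub_le_four k]

lemma hasLogSize_farSeq_succ_sub_farSeq (h : MarkoffApprox ξ K x) (k : ℕ) :
    HasLogSize 3 (farSeq x (k + 1) - farSeq x k) 0 := by
  have hfar := abs_le.1 (h.abs_farSeq_sub_le k)
  have hfar' := abs_le.1 (h.abs_farSeq_sub_le (k + 1))
  rw [pow_succ] at hfar'
  refine hasLogSize_three_zero (le_abs.2 ?_) (abs_le.2 ?_) <;>
    rcases neg_one_pow_eq_or ℝ k with hk | hk <;> rw [hk] at hfar hfar'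
  · exact Or.inl (by linarith)
  · exact Or.inr (by linarith)
  · constructor <;> linarith
  · constructor <;> linarith

lemma abs_farSeq_add_two_sub_le (h : MarkoffApprox ξ K x) (k : ℕ) :
    |farSeq x (k + 2) - farSeq x k| ≤ Real.exp (4 * K - 2 * logHeight x k) := by
  have hK := h.one_le
  have hsucc := h.le_logHeight_succ k
  have hsucc' : _ ≤ logHeight x (k + 2) := h.le_logHeight_succ (k + 1)
  have hfar := h.abs_farSeq_sub_le_exp (k + 2)
  rw [show (-1 : ℝ) ^ (k + 2) = (-1) ^ k by rw [pow_add]; norm_num] at hfar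
  have htri := abs_sub_le (farSeq x (k + 2)) (ξ - 3 * (-1) ^ k) (farSeq x k)
  rw [abs_sub_comm (ξ - 3 * (-1) ^ k)] at htri
  refine htri.trans ((add_le_add hfar (h.abs_farSeq_sub_le_exp k)).trans ?_)
  exact exp_add_exp_le (by linarith [h.large k]) (by linarith)

lemma hasLogSize_aeval_farSeq_quadSeq (h : MarkoffApprox ξ K x) (k : ℕ) :
    HasLogSize (7 * K) (aeval (farSeq x (k + 1)) (quadSeq x k)) (logHeight x k) := by
  have hnear := h.hasLogSize_sub_farSeq (k + 1) (h.abs_nearSeq_sub_le k)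
  rw [h.aeval_quadSeq]
  simpa using (((h.entry k).mul hnear.sub_comm).mul (h.hasLogSize_farSeq_succ_sub_farSeq k)).mono
    (by linarith [h.one_le] : K + 3 + 3 ≤ 7 * K)

lemma hasLogSize_aeval_nearSeq_quadSeq (h : MarkoffApprox ξ K x) (k : ℕ) :
    HasLogSize (12 * K) (aeval (nearSeq x (k + 1)) (quadSeq x k))
      (-2 * logHeight x (k + 1) - logHeight x k) := by
  have hroots := h.roots (k + 1)
  rw [pow_succ, mul_neg_one] at hroots
  have hresultant : (x (k + 1) 0 0 : ℝ) ^ 2 * (aeval (farSeq x (k + 1)) (quadSeq x k) *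
      aeval (nearSeq x (k + 1)) (quadSeq x k)) = -4 := (h.step k).sq_mul_aeval_mul_aeval hroots.symm
  have hfour : HasLogSize 3 (-4 : ℝ) 0 :=
    hasLogSize_three_zero (by norm_num) (by norm_num)
  rw [← hresultant] at hfour
  have hsize := (hfour.of_mul_left ((h.entry (k + 1)).pow 2)).of_mul_left
    (h.hasLogSize_aeval_farSeq_quadSeq k)
  rw [zero_sub, Nat.cast_two, ← neg_mul] at hsize
  exact hsize.mono (by linarith [h.one_le])

lemma hasLogSize_nearSeq_succ_sub_nearSeq (h : MarkoffApprox ξ K x) (k : ℕ) :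
    HasLogSize (20 * K) (nearSeq x (k + 1) - nearSeq x k) (-2 * logHeight x (k + 2)) := by
  have hvalue := h.hasLogSize_aeval_nearSeq_quadSeq k
  rw [h.aeval_quadSeq, mul_comm (_ * _)] at hvalue
  have hsize := (hvalue.of_mul_left
    (h.hasLogSize_sub_farSeq k (h.abs_nearSeq_sub_le (k + 1)))).of_mul_left (h.entry k)
  have hfib := abs_le.1 (h.abs_logHeight_add_two_sub_le k)
  refine (hsize.shift (K' := 4 * K) (abs_le.2 ?_)).mono (by linarith [h.one_le])
  constructor <;> linarith

lemma abs_nearSeq_sub_le_exp_add_two (h : MarkoffApprox ξ K x) (k : ℕ) :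
    |nearSeq x k - ξ| ≤ Real.exp (22 * K - 2 * logHeight x (k + 2)) := by
  have hK := h.one_le
  have hgrow : 1.6179 * logHeight x (k + 2) ≤ logHeight x (k + 1 + 2) := h.le_logHeight_succ (k + 2)
  have h1 := (h.hasLogSize_nearSeq_succ_sub_nearSeq k).sub_comm.abs_le_exp
  have h2 := (h.hasLogSize_nearSeq_succ_sub_nearSeq (k + 1)).sub_comm.abs_le_exp
  have h3 := h.abs_nearSeq_sub_le_exp (k + 2)
  have htri := abs_sub_le (nearSeq x k) (nearSeq x (k + 1)) ξ
  have htri' := abs_sub_le (nearSeq x (k + 1)) (nearSeq x (k + 2)) ξ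
  have hsum := exp_add_exp_le (r := -2 * logHeight x (k + 1 + 2) + 20 * K)
    (r' := 3 * K - 2 * logHeight x (k + 2)) (s := 21 * K - 2 * logHeight x (k + 2))
    (by linarith [h.large (k + 2)]) (by linarith)
  have hsum' := exp_add_exp_le (r := -2 * logHeight x (k + 2) + 20 * K)
    (r' := 21 * K - 2 * logHeight x (k + 2)) (s := 22 * K - 2 * logHeight x (k + 2))
    (by linarith) (by linarith)
  linarith

/-- In `α_k - ξ = (α_k - α_{k+1}) + (α_{k+1} - ξ)` the first term dominates. -/
lemma hasLogSize_nearSeq_sub (h : MarkoffApprox ξ K x) (k : ℕ) :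
    HasLogSize (21 * K) (nearSeq x k - ξ) (-2 * logHeight x (k + 2)) := by
  have hK := h.one_le
  have hgrow : 1.6179 * logHeight x (k + 2) ≤ logHeight x (k + 1 + 2) := h.le_logHeight_succ (k + 2)
  refine ((h.hasLogSize_nearSeq_succ_sub_nearSeq k).sub_comm.of_abs_sub_le
    (r := 22 * K - 2 * logHeight x (k + 1 + 2)) ?_ ?_ (by linarith)).mono (by linarith)
  · rw [sub_sub_sub_cancel_left]
    exact h.abs_nearSeq_sub_le_exp_add_two (k + 1)
  · linarith [h.large (k + 2)]

lemma hasLogSize_aeval_quadSeq (h : MarkoffApprox ξ K x) (k : ℕ) :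
    HasLogSize (31 * K) (aeval ξ (quadSeq x k)) (-gold ^ 3 * logHeight x k) := by
  have hfar := h.hasLogSize_sub_farSeq k (y := ξ) (by norm_num)
  have hsize := ((h.entry k).mul (h.hasLogSize_nearSeq_sub k).sub_comm).mul hfar
  rw [← h.aeval_quadSeq] at hsize
  have hfib := abs_le.1 (h.abs_logHeight_add_two_sub_le k)
  have hgrow := abs_le.1 (h.growth k)
  have hcube : gold ^ 3 = 2 * gold + 1 := by linear_combination (gold + 1) * gold_sq
  refine (hsize.shift (K' := 6 * K) (abs_le.2 ?_)).mono (by linarith [h.one_le])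
  rw [hcube]
  constructor <;> linarith

end MarkoffApprox

/-! ### Weighted values of an integer polynomial -/

section Weights

variable (x : ℕ → Matrix (Fin 2) (Fin 2) ℤ) (k : ℕ) (i : ℤ) (j : ℕ)

/-- The factor `u_{k+1}^i a_{k+1}^{2j} F_k(β_{k+1})^j` by which the value of a polynomial at
`α_{k+1}` is multiplied to get an algebraic integer; `farWeight` is its conjugate. -/
noncomputable def nearWeight : ℝ :=
  unitSeq x (k + 1) ^ i *
    ((x (k + 1) 0 0 : ℝ) ^ (2 * j) * aeval (farSeq x (k + 1)) (quadSeq x k) ^ j)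

/-- The factor `u_{k+1}^{-i} a_{k+1}^{2j} F_k(α_{k+1})^j` by which the value of a polynomial at
`β_{k+1}` is multiplied. -/
noncomputable def farWeight : ℝ :=
  unitSeq x (k + 1) ^ (-i) *
    ((x (k + 1) 0 0 : ℝ) ^ (2 * j) * aeval (nearSeq x (k + 1)) (quadSeq x k) ^ j)

lemma natDegree_quadSeq_pow_le : (quadSeq x k ^ j).natDegree ≤ 2 * j := by
  rw [mul_comm]
  exact natDegree_pow_le_of_le j (natDegree_markoffQuad_le _ _ _ _)

end Weights

lemma abs_le_abs_add {y z r : ℝ} (h : |y - z| ≤ r) : |y| ≤ |z| + r := by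
  linarith [abs_sub_abs_le_abs_sub y z]

namespace MarkoffApprox

variable {ξ K : ℝ} {x : ℕ → Matrix (Fin 2) (Fin 2) ℤ} {R : ℤ[X]}

section Weights

variable {i : ℤ} {j : ℕ}

lemma hasLogSize_nearWeight (h : MarkoffApprox ξ K x) (k : ℕ) (hi : |i| ≤ 2) (hj : j ≤ 3) :
    HasLogSize (50 * K) (nearWeight x k i j)
      (i * logHeight x (k + 1) + j * (2 * logHeight x (k + 1) + logHeight x k)) := by
  have hi' : |(i : ℝ)| ≤ 2 := by exact_mod_cast hi
  have hj' : (j : ℝ) ≤ 3 := by exact_mod_cast hj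
  have hsize := ((h.hasLogSize_unitSeq (k + 1)).zpow i).mul
    (((h.entry (k + 1)).pow (2 * j)).mul ((h.hasLogSize_aeval_farSeq_quadSeq k).pow j))
  push_cast at hsize
  rw [nearWeight]
  convert hsize.mono (K' := 50 * K) (by nlinarith [h.one_le]) using 1
  ring

lemma hasLogSize_farWeight (h : MarkoffApprox ξ K x) (k : ℕ) (hi : |i| ≤ 2) (hj : j ≤ 3) :
    HasLogSize (50 * K) (farWeight x k i j)
      (-i * logHeight x (k + 1) - j * logHeight x k) := by
  have hi' : |(i : ℝ)| ≤ 2 := by exact_mod_cast hi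
  have hj' : (j : ℝ) ≤ 3 := by exact_mod_cast hj
  have hsize := ((h.hasLogSize_unitSeq (k + 1)).zpow (-i)).mul
    (((h.entry (k + 1)).pow (2 * j)).mul ((h.hasLogSize_aeval_nearSeq_quadSeq k).pow j))
  push_cast at hsize
  rw [abs_neg] at hsize
  rw [farWeight]
  convert hsize.mono (K' := 50 * K) (by nlinarith [h.one_le]) using 1
  ring

lemma unit_farSeq (h : MarkoffApprox ξ K x) (k : ℕ) :
    markoffUnit (x k 0 0) (x k 0 1) ((-1) ^ k) (farSeq x k) = (unitSeq x k)⁻¹ :=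
  eq_inv_of_mul_eq_one_right (h.roots k).unit_mul_unit

lemma unit_zpow_mem_order (h : MarkoffApprox ξ K x) (k : ℕ) (i : ℤ) :
    (unitSeq x k ^ i, unitSeq x k ^ (-i)) ∈ (h.roots k).order := by
  rw [zpow_neg, ← inv_zpow, ← h.unit_farSeq]
  exact (h.roots k).unit_zpow_mem_order i

lemma mem_order_of_natDegree_le (h : MarkoffApprox ξ K x) (k : ℕ) (i : ℤ)
    (hR : R.natDegree ≤ 2 * j) :
    (nearWeight x k i j * aeval (nearSeq x (k + 1)) R,
      farWeight x k i j * aeval (farSeq x (k + 1)) R) ∈ (h.roots (k + 1)).order := by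
  convert mul_mem (h.unit_zpow_mem_order (k + 1) i)
    ((h.roots (k + 1)).aeval_mul_aeval_mem_order (natDegree_quadSeq_pow_le x k j) hR) using 1
  simp only [nearWeight, farWeight, map_pow, Prod.mk_mul_mk, mul_assoc]

lemma mem_conjLattice_of_natDegree_le (h : MarkoffApprox ξ K x) (k : ℕ) (i : ℤ)
    (hR : R.natDegree ≤ 2 * j + 1) :
    (nearWeight x k i j * aeval (nearSeq x (k + 1)) R,
      farWeight x k i j * aeval (farSeq x (k + 1)) R) ∈
        conjLattice (nearSeq x (k + 1)) (farSeq x (k + 1)) := by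
  convert (h.roots (k + 1)).mul_mem_conjLattice (h.unit_zpow_mem_order (k + 1) i)
    ((h.roots (k + 1)).aeval_mul_aeval_mem_conjLattice (natDegree_quadSeq_pow_le x k j) hR) using 1
  simp only [nearWeight, farWeight, map_pow, Prod.mk_mul_mk, mul_assoc]

end Weights

lemma one_le_abs_nearSeq_sub_farSeq (h : MarkoffApprox ξ K x) (k : ℕ) :
    1 ≤ |nearSeq x k - farSeq x k| :=
  h.one_le_abs_sub_farSeq k (h.abs_nearSeq_sub_le k)

lemma nearSeq_ne_farSeq (h : MarkoffApprox ξ K x) (k : ℕ) : nearSeq x k ≠ farSeq x k := fun heq =>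
  absurd (h.one_le_abs_nearSeq_sub_farSeq k) (by simp [heq])

lemma exp_le_abs_unitSeq_sub_inv (h : MarkoffApprox ξ K x) (k : ℕ) :
    Real.exp (logHeight x k - 4 * K) ≤ |unitSeq x k - (unitSeq x k)⁻¹| := by
  have hK := h.one_le
  have hu := (h.hasLogSize_unitSeq k).exp_le_abs
  have hu' := (h.hasLogSize_unitSeq k).inv.abs_le_exp
  have hsum := exp_add_exp_le (r := logHeight x k - 4 * K) (r' := -logHeight x k + 3 * K)
    (s := logHeight x k - 3 * K) (by linarith) (by linarith [h.large k])
  linarith [abs_sub_abs_le_abs_sub (unitSeq x k) (unitSeq x k)⁻¹]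

lemma norm_bound_le_exp (h : MarkoffApprox ξ K x) (R : ℤ[X]) :
    252 * (|ξ| + 20) ^ 6 * polyNorm R ≤ Real.exp (logNorm R + K) := by
  rw [add_comm (logNorm R), Real.exp_add]
  exact mul_le_mul h.absorb (polyNorm_le_exp_logNorm R) (Nat.cast_nonneg _) (Real.exp_pos _).le

lemma abs_aeval_le_exp (h : MarkoffApprox ξ K x) (hR : R.natDegree ≤ 6) {y : ℝ}
    (hy : |y - ξ| ≤ 20) : |aeval y R| ≤ Real.exp (logNorm R + K) := by
  refine (abs_aeval_le hR (by linarith [abs_nonneg ξ]) (abs_le_abs_add hy)).trans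
    (le_trans ?_ (h.norm_bound_le_exp R))
  gcongr
  norm_num

lemma abs_aeval_sub_aeval_le_exp (h : MarkoffApprox ξ K x) (hR : R.natDegree ≤ 6) {y z : ℝ}
    (hy : |y - ξ| ≤ 20) (hz : |z - ξ| ≤ 20) :
    |aeval y R - aeval z R| ≤ Real.exp (logNorm R + K) * |y - z| := by
  refine (abs_aeval_sub_aeval_le hR (by linarith [abs_nonneg ξ]) (abs_le_abs_add hy)
    (abs_le_abs_add hz)).trans ?_
  gcongr
  refine le_trans ?_ (h.norm_bound_le_exp R)
  gcongr
  norm_num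

lemma abs_aeval_sub_linear_le_exp (h : MarkoffApprox ξ K x) (hR : R.natDegree ≤ 6) {y : ℝ}
    (hy : |y - ξ| ≤ 20) :
    |aeval y R - aeval ξ R - aeval ξ (derivative R) * (y - ξ)| ≤
      Real.exp (logNorm R + K) * |y - ξ| * |y - ξ| := by
  have hξ : |ξ| ≤ |ξ| + 20 := by linarith
  refine (abs_aeval_sub_linear_le hR (by linarith [abs_nonneg ξ]) (abs_le_abs_add hy)
    hξ hξ le_rfl (by simp)).trans ?_
  gcongr
  refine le_trans ?_ (h.norm_bound_le_exp R)
  gcongr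
  norm_num

lemma abs_aeval_farSeq_le (h : MarkoffApprox ξ K x) (hR : R.natDegree ≤ 6) (k : ℕ) :
    |aeval (farSeq x k) R| ≤ Real.exp (logNorm R + K) :=
  h.abs_aeval_le_exp hR (by linarith [h.abs_farSeq_sub_le_four k])

lemma abs_aeval_nearSeq_le (h : MarkoffApprox ξ K x) (hR : R.natDegree ≤ 6) (k : ℕ) {s : ℝ}
    (hs : |aeval ξ R| ≤ Real.exp s) :
    |aeval (nearSeq x k) R| ≤
      Real.exp s + Real.exp (logNorm R + 23 * K - 2 * logHeight x (k + 2)) := by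
  have hsub := h.abs_aeval_sub_aeval_le_exp hR (y := nearSeq x k) (z := ξ)
    (by linarith [h.abs_nearSeq_sub_le k]) (by simp)
  have hexp : Real.exp (logNorm R + K) * |nearSeq x k - ξ| ≤
      Real.exp (logNorm R + 23 * K - 2 * logHeight x (k + 2)) := by
    refine (mul_le_mul_of_nonneg_left (h.hasLogSize_nearSeq_sub k).abs_le_exp
      (Real.exp_pos _).le).trans ?_
    rw [← Real.exp_add, Real.exp_le_exp]
    linarith [h.one_le]
  linarith [abs_sub_abs_le_abs_sub (aeval (nearSeq x k) R) (aeval ξ R)]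

lemma abs_aeval_nearSeq_sub_le (h : MarkoffApprox ξ K x) (hR : R.natDegree ≤ 6) (k : ℕ) {s : ℝ}
    (hs : |aeval ξ R| ≤ Real.exp s) :
    |aeval (nearSeq x k) R - aeval ξ (derivative R) * (nearSeq x k - ξ)| ≤
      Real.exp s + Real.exp (logNorm R + 43 * K - 4 * logHeight x (k + 2)) := by
  have hlin := h.abs_aeval_sub_linear_le_exp hR (y := nearSeq x k)
    (by linarith [h.abs_nearSeq_sub_le k])
  have hexp : Real.exp (logNorm R + K) * |nearSeq x k - ξ| * |nearSeq x k - ξ| ≤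
      Real.exp (logNorm R + 43 * K - 4 * logHeight x (k + 2)) := by
    have hnear := (h.hasLogSize_nearSeq_sub k).abs_le_exp
    calc _ ≤ Real.exp (logNorm R + K) * Real.exp (-2 * logHeight x (k + 2) + 21 * K) *
          Real.exp (-2 * logHeight x (k + 2) + 21 * K) := by gcongr
      _ = _ := by rw [← Real.exp_add, ← Real.exp_add]; ring_nf
  calc |aeval (nearSeq x k) R - aeval ξ (derivative R) * (nearSeq x k - ξ)|
      = |aeval ξ R + (aeval (nearSeq x k) R - aeval ξ R -
          aeval ξ (derivative R) * (nearSeq x k - ξ))| := by ring_nf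
    _ ≤ _ := (abs_add_le _ _).trans (add_le_add hs (hlin.trans hexp))

end MarkoffApprox

/-! ### Degrees three, four and five -/

namespace MarkoffApprox

variable {ξ K : ℝ} {x : ℕ → Matrix (Fin 2) (Fin 2) ℤ} {R : ℤ[X]}

lemma logHeight_le_of_aeval_eq_zero (h : MarkoffApprox ξ K x) (hR0 : R ≠ 0) {k : ℕ}
    (hnear : aeval (nearSeq x k) R = 0) (hfar : aeval (farSeq x k) R = 0) :
    logHeight x k ≤ logNorm R + 2 * K := by
  obtain ⟨A, hA⟩ := (h.roots k).exists_markoffQuad_mul_eq (h.entry_ne_zero k)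
    (h.nearSeq_ne_farSeq k) hnear hfar
  have hlead := congrArg leadingCoeff hA
  rw [leadingCoeff_mul, leadingCoeff_mul, leadingCoeff_C, markoffQuad,
    leadingCoeff_quadratic (h.entry_ne_zero k)] at hlead
  have hle : |(x k 0 0 : ℝ)| ≤ 2 * |(R.leadingCoeff : ℝ)| := by
    have hdvd : |x k 0 0| ∣ |2 * R.leadingCoeff| := abs_dvd_abs _ _ |>.2 ⟨_, hlead.symm⟩
    have := Int.le_of_dvd (abs_pos.2 (mul_ne_zero two_ne_zero (leadingCoeff_ne_zero.2 hR0))) hdvd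
    rw [abs_mul] at this
    exact_mod_cast this
  have hexp : Real.exp (logHeight x k - K) ≤ Real.exp (logNorm R + 1) :=
    calc Real.exp (logHeight x k - K) ≤ 2 * |(R.leadingCoeff : ℝ)| :=
          (h.entry k).exp_le_abs.trans hle
      _ ≤ Real.exp (logNorm R) + Real.exp (logNorm R) := by
          linarith [abs_coeff_le_polyNorm R R.natDegree, polyNorm_le_exp_logNorm R,
            show |(R.leadingCoeff : ℝ)| = |(R.coeff R.natDegree : ℝ)| from rfl]
      _ ≤ Real.exp (logNorm R + 1) := exp_add_exp_le le_rfl le_rfl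
  linarith [Real.exp_le_exp.1 hexp, h.one_le]

lemma aeval_eq_zero_of_natDegree_le_three (h : MarkoffApprox ξ K x) (hR : R.natDegree ≤ 3) (k : ℕ)
    (hh : logNorm R ≤ logHeight x (k + 2) - 100 * K)
    (hr : |aeval ξ R| ≤ Real.exp (-3 * logHeight x (k + 1) - logHeight x k - 100 * K)) :
    aeval (nearSeq x (k + 1)) R = 0 ∧ aeval (farSeq x (k + 1)) R = 0 := by
  have hK := h.one_le
  have hfib := abs_le.1 (h.abs_logHeight_add_two_sub_le k)
  have hfib' := abs_le.1 (h.abs_logHeight_add_two_sub_le (k + 1))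
  have hw := h.hasLogSize_nearWeight k (i := 1) (j := 1) (by norm_num) (by norm_num)
  have hw' := h.hasLogSize_farWeight k (i := 1) (j := 1) (by norm_num) (by norm_num)
  push_cast at hw hw'
  have hnear : |aeval (nearSeq x (k + 1)) R| ≤
      Real.exp (-3 * logHeight x (k + 1) - logHeight x k - 60 * K) :=
    (h.abs_aeval_nearSeq_le (by omega) (k + 1) hr).trans
      (exp_add_exp_le (by linarith) (by linarith))
  have hv : |nearWeight x k 1 1 * aeval (nearSeq x (k + 1)) R| ≤ Real.exp (-2) :=
    (hw.abs_mul_le_exp hnear).trans (Real.exp_le_exp.2 (by linarith))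
  have hv' : |farWeight x k 1 1 * aeval (farSeq x (k + 1)) R| ≤ Real.exp (-2) :=
    (hw'.abs_mul_le_exp (h.abs_aeval_farSeq_le (by omega) (k + 1))).trans
      (Real.exp_le_exp.2 (by linarith))
  have hlt : Real.exp (-2) + Real.exp (-2) < 1 :=
    (exp_add_exp_le (s := -1) (by norm_num) (by norm_num)).trans_lt (by simp)
  obtain ⟨h0, h0'⟩ := eq_zero_of_mem_conjLattice (h.mem_conjLattice_of_natDegree_le k 1 hR)
    ((add_le_add hv hv').trans_lt (hlt.trans_le (h.one_le_abs_nearSeq_sub_farSeq (k + 1))))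
    (hv'.trans_lt (by simp))
  exact ⟨(mul_eq_zero.1 h0).resolve_left hw.ne_zero, (mul_eq_zero.1 h0').resolve_left hw'.ne_zero⟩

lemma not_aeval_eq_zero_and_aeval_eq_zero (h : MarkoffApprox ξ K x) (hR0 : R ≠ 0) {k : ℕ}
    (hh : logNorm R + 2 * K < logHeight x k) :
    ¬(aeval (nearSeq x k) R = 0 ∧ aeval (farSeq x k) R = 0) := fun h0 =>
  hh.not_ge (h.logHeight_le_of_aeval_eq_zero hR0 h0.1 h0.2)

/-- In even degree the pair of weighted values lies in the order `ℤ + ℤ u`, whose nonintegral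
elements have a conjugate at least as large as `u / 2`. -/
lemma exists_intCast_eq_of_natDegree_le (h : MarkoffApprox ξ K x) (hR0 : R ≠ 0) {i : ℤ} {j : ℕ}
    (hR : R.natDegree ≤ 2 * j) (hi : |i| ≤ 2) (hj : j ≤ 3) (k : ℕ)
    (hh : logNorm R + 2 * K < logHeight x (k + 1))
    (hv : |nearWeight x k i j * aeval (nearSeq x (k + 1)) R| ≤
      Real.exp (logHeight x (k + 1) - 6 * K))
    (hv' : |farWeight x k i j * aeval (farSeq x (k + 1)) R| ≤
      Real.exp (logHeight x (k + 1) - 6 * K)) :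
    ∃ m : ℤ, m ≠ 0 ∧ nearWeight x k i j * aeval (nearSeq x (k + 1)) R = m ∧
      farWeight x k i j * aeval (farSeq x (k + 1)) R = m := by
  have hK := h.one_le
  have hsum : Real.exp (logHeight x (k + 1) - 6 * K) + Real.exp (logHeight x (k + 1) - 6 * K) <
      |unitSeq x (k + 1) - (unitSeq x (k + 1))⁻¹| :=
    (exp_add_exp_le (s := logHeight x (k + 1) - 5 * K) (by linarith) (by linarith)).trans_lt
      ((Real.exp_lt_exp.2 (by linarith)).trans_le (h.exp_le_abs_unitSeq_sub_inv (k + 1)))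
  rw [← h.unit_farSeq] at hsum
  obtain ⟨m, hm, hm'⟩ := exists_intCast_eq_of_mem_conjLattice (h.mem_order_of_natDegree_le k i hR)
    ((add_le_add hv hv').trans_lt hsum)
  refine ⟨m, fun h0 => h.not_aeval_eq_zero_and_aeval_eq_zero hR0 hh ?_, hm, hm'⟩
  rw [h0, Int.cast_zero, mul_eq_zero] at hm hm'
  exact ⟨hm.resolve_left (h.hasLogSize_nearWeight k hi hj).ne_zero,
    hm'.resolve_left (h.hasLogSize_farWeight k hi hj).ne_zero⟩

lemma lt_abs_aeval_of_natDegree_le_four (h : MarkoffApprox ξ K x) (hR0 : R ≠ 0)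
    (hR : R.natDegree ≤ 4) (k : ℕ) (hh : logNorm R ≤ 0.9 * logHeight x (k + 1)) :
    Real.exp (-4.5 * logHeight x (k + 1)) < |aeval ξ R| := by
  by_contra! hr
  have hK := h.one_le
  have hl := h.large (k + 1)
  have hgrow := h.le_logHeight_succ k
  have hgrow' := h.logHeight_succ_le k
  have hgrow₁ : _ ≤ logHeight x (k + 2) := h.le_logHeight_succ (k + 1)
  have hgrow₂ : _ ≤ logHeight x (k + 1 + 2) := h.le_logHeight_succ (k + 2)
  have hw := h.hasLogSize_nearWeight k (i := 0) (j := 2) (by norm_num) (by norm_num)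
  have hw' := h.hasLogSize_farWeight k (i := 0) (j := 2) (by norm_num) (by norm_num)
  push_cast at hw hw'
  have hnear : |aeval (nearSeq x (k + 1)) R| ≤ Real.exp (-4.33 * logHeight x (k + 1)) :=
    (h.abs_aeval_nearSeq_le (by omega) (k + 1) hr).trans
      (exp_add_exp_le (by linarith) (by linarith))
  have hv' : |farWeight x k 0 2 * aeval (farSeq x (k + 1)) R| ≤ Real.exp (-1) :=
    (hw'.abs_mul_le_exp (h.abs_aeval_farSeq_le (by omega) (k + 1))).trans
      (Real.exp_le_exp.2 (by linarith))
  obtain ⟨m, hm0, -, hm⟩ := h.exists_intCast_eq_of_natDegree_le hR0 (i := 0) (j := 2) hR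
    (by norm_num) (by norm_num) k (by linarith)
    ((hw.abs_mul_le_exp hnear).trans (Real.exp_le_exp.2 (by linarith)))
    (hv'.trans (Real.exp_le_exp.2 (by linarith)))
  have hlt : |(m : ℝ)| < 1 := hm ▸ hv'.trans_lt (by simp)
  exact hm0 (Int.abs_lt_one_iff.1 (by exact_mod_cast hlt))

/-- A nonzero coefficient `n` in `(m + n α_k, m + n β_k)` would make `m + n ξ` too small. -/
lemma eq_zero_of_mem_conjLattice_nearSeq_farSeq (h : MarkoffApprox ξ K x) {k : ℕ} {v v' s : ℝ}
    (hmem : (v, v') ∈ conjLattice (nearSeq x k) (farSeq x k))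
    (hv : |v| ≤ Real.exp (-2 * s - 4 * K)) (hv' : |v'| ≤ Real.exp s) (hs : 0 ≤ s)
    (hsk : s ≤ logHeight x k) : v = 0 ∧ v' = 0 := by
  have hK := h.one_le
  obtain ⟨m, n, rfl, rfl⟩ := mem_conjLattice.1 hmem
  have hn : n = 0 := by
    by_contra hn
    have hn_le : |(n : ℝ)| ≤ Real.exp (s + 1) := by
      calc |(n : ℝ)| ≤ |(n : ℝ)| * |nearSeq x k - farSeq x k| :=
            le_mul_of_one_le_right (abs_nonneg _) (h.one_le_abs_nearSeq_sub_farSeq k)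
        _ = |(m + n * nearSeq x k) - (m + n * farSeq x k)| := by rw [← abs_mul]; ring_nf
        _ ≤ Real.exp (s + 1) := (abs_sub _ _).trans ((add_le_add hv hv').trans
            (exp_add_exp_le (by linarith) le_rfl))
    have hnear : |(nearSeq x k - ξ) * n| ≤ Real.exp (-2 * s - 4 * K) := by
      refine ((h.hasLogSize_nearSeq_sub k).abs_mul_le_exp hn_le).trans (Real.exp_le_exp.2 ?_)
      have hgrow₁ : _ ≤ logHeight x (k + 2) := h.le_logHeight_succ (k + 1)
      linarith [h.le_logHeight_succ k, h.large k]
    have hlin : |(m : ℝ) + n * ξ| ≤ Real.exp (-2 * s - 4 * K + 1) := by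
      rw [show (m : ℝ) + n * ξ = (m + n * nearSeq x k) - (nearSeq x k - ξ) * n by ring]
      exact (abs_sub _ _).trans ((add_le_add hv hnear).trans (exp_add_exp_le le_rfl le_rfl))
    have := Real.exp_le_exp.1 ((h.irrational m n (s + 1) hn hn_le).trans hlin)
    nlinarith [gold_lt]
  have hm : m = 0 := by
    rw [hn, Int.cast_zero, zero_mul, add_zero] at hv
    have hlt : |(m : ℝ)| < 1 := hv.trans_lt (Real.exp_lt_one_iff.2 (by linarith))
    exact Int.abs_lt_one_iff.1 (by exact_mod_cast hlt)
  simp [hn, hm]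

lemma lt_abs_aeval_of_natDegree_le_five (h : MarkoffApprox ξ K x) (hR0 : R ≠ 0)
    (hR : R.natDegree ≤ 5) (k : ℕ) (hh : logNorm R ≤ 0.45 * logHeight x (k + 1)) :
    Real.exp (-4.8 * logHeight x (k + 1)) < |aeval ξ R| := by
  by_contra! hr
  have hK := h.one_le
  have hl := h.large (k + 1)
  have hgrow := h.le_logHeight_succ k
  have hgrow' := h.logHeight_succ_le k
  have hgrow₁ : _ ≤ logHeight x (k + 2) := h.le_logHeight_succ (k + 1)
  have hgrow₂ : _ ≤ logHeight x (k + 1 + 2) := h.le_logHeight_succ (k + 2)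
  have hw := h.hasLogSize_nearWeight k (i := -1) (j := 2) (by norm_num) (by norm_num)
  have hw' := h.hasLogSize_farWeight k (i := -1) (j := 2) (by norm_num) (by norm_num)
  push_cast at hw hw'
  have hnear : |aeval (nearSeq x (k + 1)) R| ≤ Real.exp (-4.78 * logHeight x (k + 1)) :=
    (h.abs_aeval_nearSeq_le (by omega) (k + 1) hr).trans
      (exp_add_exp_le (by linarith) (by linarith))
  obtain ⟨h0, h0'⟩ := h.eq_zero_of_mem_conjLattice_nearSeq_farSeq
    (h.mem_conjLattice_of_natDegree_le k (-1) (j := 2) hR) (s := 0.22 * logHeight x (k + 1))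
    ((hw.abs_mul_le_exp hnear).trans (Real.exp_le_exp.2 (by linarith)))
    ((hw'.abs_mul_le_exp (h.abs_aeval_farSeq_le (by omega) (k + 1))).trans
      (Real.exp_le_exp.2 (by linarith))) (by linarith) (by linarith)
  exact h.not_aeval_eq_zero_and_aeval_eq_zero hR0 (by linarith)
    ⟨(mul_eq_zero.1 h0).resolve_left hw.ne_zero, (mul_eq_zero.1 h0').resolve_left hw'.ne_zero⟩

end MarkoffApprox

/-! ### Cubic multiples of a quadratic -/

namespace MarkoffApprox

variable {ξ K : ℝ} {x : ℕ → Matrix (Fin 2) (Fin 2) ℤ} {A R : ℤ[X]}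

lemma exists_quadSeq_mul_eq (h : MarkoffApprox ξ K x) (hR0 : R ≠ 0) (hR : R.natDegree ≤ 3)
    {k : ℕ} (hnear : aeval (nearSeq x k) R = 0) (hfar : aeval (farSeq x k) R = 0) :
    ∃ A : ℤ[X], A ≠ 0 ∧ A.natDegree ≤ 1 ∧ quadSeq x k * A = C 2 * R := by
  obtain ⟨A, hA⟩ := (h.roots k).exists_markoffQuad_mul_eq (h.entry_ne_zero k)
    (h.nearSeq_ne_farSeq k) hnear hfar
  have hne : quadSeq x k * A ≠ 0 := hA ▸ mul_ne_zero (C_ne_zero.2 two_ne_zero) hR0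
  have hquad : (quadSeq x k).natDegree = 2 := natDegree_quadratic (h.entry_ne_zero k)
  have hdeg : (quadSeq x k * A).natDegree ≤ 3 := hA ▸ (natDegree_C_mul_le 2 R).trans hR
  rw [natDegree_mul (left_ne_zero_of_mul hne) (right_ne_zero_of_mul hne), hquad] at hdeg
  exact ⟨A, right_ne_zero_of_mul hne, by omega, hA⟩

lemma exp_le_abs_aeval_quadSeq (h : MarkoffApprox ξ K x) (k : ℕ) {y : ℝ} (hy : 10 ≤ y - ξ) :
    Real.exp (logHeight x k - K) ≤ |aeval y (quadSeq x k)| := by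
  have hnear : 1 ≤ |y - nearSeq x k| :=
    le_abs.2 (Or.inl (by linarith [(abs_le.1 (h.abs_nearSeq_sub_le k)).2]))
  have hfar : 1 ≤ |y - farSeq x k| :=
    le_abs.2 (Or.inl (by linarith [(abs_le.1 (h.abs_farSeq_sub_le_four k)).2]))
  rw [h.aeval_quadSeq, mul_assoc, abs_mul, abs_mul]
  exact (h.entry k).exp_le_abs.trans
    (le_mul_of_one_le_right (abs_nonneg _) (one_le_mul_of_one_le_of_one_le hnear hfar))

lemma abs_aeval_le_of_quadSeq_mul_eq (h : MarkoffApprox ξ K x) (hR : R.natDegree ≤ 6) {k : ℕ}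
    (hA : quadSeq x k * A = C 2 * R) {y : ℝ} (hy : 10 ≤ y - ξ) (hy' : y - ξ ≤ 20) :
    |aeval y A| ≤ Real.exp (logNorm R - logHeight x k + 2 * K + 1) := by
  have hRy := h.abs_aeval_le_exp hR (abs_le.2 ⟨by linarith, hy'⟩)
  have hmul : |aeval y (quadSeq x k)| * |aeval y A| = |aeval y R| + |aeval y R| := by
    rw [← abs_mul, ← map_mul, hA, map_mul, aeval_C, algebraMap_int_eq, abs_mul]
    norm_num [two_mul]
  have hexp : Real.exp (logHeight x k - K) * |aeval y A| ≤ Real.exp (logNorm R + K + 1) :=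
    calc Real.exp (logHeight x k - K) * |aeval y A|
        ≤ |aeval y (quadSeq x k)| * |aeval y A| := by
          gcongr
          exact h.exp_le_abs_aeval_quadSeq k hy
      _ ≤ Real.exp (logNorm R + K) + Real.exp (logNorm R + K) := hmul ▸ add_le_add hRy hRy
      _ ≤ Real.exp (logNorm R + K + 1) := exp_add_exp_le le_rfl le_rfl
  rw [← le_div_iff₀' (Real.exp_pos _), ← Real.exp_sub] at hexp
  exact hexp.trans (Real.exp_le_exp.2 (by linarith))

lemma exp_le_abs_aeval_of_natDegree_le_one (h : MarkoffApprox ξ K x) (hA0 : A ≠ 0)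
    (hA : A.natDegree ≤ 1) {y w : ℝ} (hy : |aeval y A| ≤ Real.exp w)
    (hy' : |aeval (y + 1) A| ≤ Real.exp w) :
    0 ≤ w + 1 ∧ Real.exp (-K - gold * (w + 1)) ≤ |aeval ξ A| := by
  obtain ⟨n, m, rfl⟩ := exists_eq_X_add_C_of_natDegree_le_one hA
  simp only [eq_intCast, map_add, map_mul, map_intCast, aeval_X] at hy hy' ⊢
  have hn : |(n : ℝ)| ≤ Real.exp (w + 1) :=
    calc |(n : ℝ)| = |(n * (y + 1) + m) - (n * y + m)| := by ring_nf
      _ ≤ Real.exp w + Real.exp w := (abs_sub _ _).trans (add_le_add hy' hy)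
      _ ≤ Real.exp (w + 1) := exp_add_exp_le le_rfl le_rfl
  rcases eq_or_ne n 0 with rfl | hn0
  · have hm0 : m ≠ 0 := by
      rintro rfl
      simp at hA0
    have hm : 1 ≤ |(m : ℝ)| := by exact_mod_cast Int.one_le_abs hm0
    simp only [Int.cast_zero, zero_mul, zero_add] at hy ⊢
    have hw : 0 ≤ w := Real.one_le_exp_iff.1 (hm.trans hy)
    exact ⟨by linarith,
      (Real.exp_le_one_iff.2 (by nlinarith [h.one_le, lt_gold])).trans hm⟩
  · have hn1 : 1 ≤ |(n : ℝ)| := by exact_mod_cast Int.one_le_abs hn0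
    exact ⟨Real.one_le_exp_iff.1 (hn1.trans hn), add_comm (m : ℝ) _ ▸
      h.irrational m n (w + 1) hn0 hn⟩

lemma exp_le_abs_aeval_of_aeval_eq_zero (h : MarkoffApprox ξ K x) (hR0 : R ≠ 0)
    (hR : R.natDegree ≤ 3) {k : ℕ} (hnear : aeval (nearSeq x k) R = 0)
    (hfar : aeval (farSeq x k) R = 0) :
    Real.exp (-gold ^ 3 * logNorm R - 60 * K) ≤ |aeval ξ R| := by
  have hK := h.one_le
  obtain ⟨A, hA0, hAdeg, hA⟩ := h.exists_quadSeq_mul_eq hR0 hR hnear hfar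
  set w := logNorm R - logHeight x k + 2 * K + 1 with hw
  obtain ⟨hw0, hAξ⟩ := h.exp_le_abs_aeval_of_natDegree_le_one hA0 hAdeg
    (h.abs_aeval_le_of_quadSeq_mul_eq (hR.trans (by norm_num)) hA (y := ξ + 10)
      (by linarith) (by linarith))
    (h.abs_aeval_le_of_quadSeq_mul_eq (hR.trans (by norm_num)) hA (by linarith) (by linarith))
  have hmul : |aeval ξ (quadSeq x k)| * |aeval ξ A| = 2 * |aeval ξ R| := by
    rw [← abs_mul, ← map_mul, hA, map_mul, aeval_C, algebraMap_int_eq, abs_mul]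
    norm_num
  have hlow : Real.exp (-gold ^ 3 * logHeight x k - 31 * K) * Real.exp (-K - gold * (w + 1)) ≤
      2 * |aeval ξ R| :=
    hmul ▸ mul_le_mul (h.hasLogSize_aeval_quadSeq k).exp_le_abs hAξ (Real.exp_pos _).le
      (abs_nonneg _)
  have hexp : -gold ^ 3 * logNorm R - 60 * K + 1 ≤
      -gold ^ 3 * logHeight x k - 31 * K + (-K - gold * (w + 1)) := by
    have hcube : gold ^ 3 = 2 * gold + 1 := by linear_combination (gold + 1) * gold_sq
    rw [hcube]
    nlinarith [hw, gold_lt, lt_gold]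
  rw [← Real.exp_add] at hlow
  linarith [exp_add_exp_le (r := -gold ^ 3 * logNorm R - 60 * K) le_rfl le_rfl,
    Real.exp_le_exp.2 hexp]

end MarkoffApprox

/-! ### Degree six -/

namespace MarkoffApprox

variable {ξ K : ℝ} {x : ℕ → Matrix (Fin 2) (Fin 2) ℤ} {R : ℤ[X]}

lemma exists_hasLogSize_aeval (h : MarkoffApprox ξ K x) (hR0 : R ≠ 0) (hR : R.natDegree ≤ 6)
    (k : ℕ) (hh : logNorm R ≤ 0.31 * logHeight x (k + 1))
    (hr : |aeval ξ R| ≤ Real.exp (-4 * logHeight x (k + 1) - 3 * logHeight x k - 100 * K)) :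
    ∃ μ, 0 ≤ μ ∧ μ ≤ 2 * logHeight x (k + 1) - 3 * logHeight x k + logNorm R + 60 * K ∧
      HasLogSize (50 * K) (aeval (nearSeq x (k + 1)) R)
        (μ - 4 * logHeight x (k + 1) - 3 * logHeight x k) ∧
      HasLogSize (50 * K) (aeval (farSeq x (k + 1)) R)
        (μ - 2 * logHeight x (k + 1) + 3 * logHeight x k) := by
  have hK := h.one_le
  have hl := h.large (k + 1)
  have hgrow := h.le_logHeight_succ k
  have hgrow' := h.logHeight_succ_le k
  have hgrow₁ : _ ≤ logHeight x (k + 2) := h.le_logHeight_succ (k + 1)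
  have hgrow₂ : _ ≤ logHeight x (k + 1 + 2) := h.le_logHeight_succ (k + 2)
  have hw := h.hasLogSize_nearWeight k (i := -2) (j := 3) (by norm_num) (by norm_num)
  have hw' := h.hasLogSize_farWeight k (i := -2) (j := 3) (by norm_num) (by norm_num)
  push_cast at hw hw'
  have hnear : |aeval (nearSeq x (k + 1)) R| ≤ Real.exp (-4.92 * logHeight x (k + 1)) :=
    (h.abs_aeval_nearSeq_le hR (k + 1) hr).trans (exp_add_exp_le (by linarith) (by linarith))
  have hv' := hw'.abs_mul_le_exp (h.abs_aeval_farSeq_le hR (k + 1))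
  obtain ⟨m, hm0, hm, hm'⟩ := h.exists_intCast_eq_of_natDegree_le hR0 (i := -2) (j := 3) hR
    (by norm_num) (by norm_num) k (by linarith)
    ((hw.abs_mul_le_exp hnear).trans (Real.exp_le_exp.2 (by linarith)))
    (hv'.trans (Real.exp_le_exp.2 (by linarith)))
  have hlog := hasLogSize_log (Int.cast_ne_zero (α := ℝ) |>.2 hm0)
  have hsize : HasLogSize 0 (nearWeight x k (-2) 3 * aeval (nearSeq x (k + 1)) R) (Real.log m) := by
    rwa [hm]
  have hsize' : HasLogSize 0 (farWeight x k (-2) 3 * aeval (farSeq x (k + 1)) R) (Real.log m) := by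
    rwa [hm']
  refine ⟨Real.log m, Real.log_intCast_nonneg m, ?_, ?_, ?_⟩
  · linarith [Real.exp_le_exp.1 (hsize'.exp_le_abs.trans hv')]
  · convert hsize.of_mul_left hw using 1 <;> ring
  · convert hsize'.of_mul_left hw' using 1 <;> ring

/-- All values at points near `ξ` are governed by the single number `R'(ξ)`. -/
lemma hasLogSize_aeval_nearSeq_of_add_two (h : MarkoffApprox ξ K x) (hR : R.natDegree ≤ 6) {k : ℕ}
    {s σ : ℝ} (hs : |aeval ξ R| ≤ Real.exp s) (hsσ : s + 200 * K ≤ σ)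
    (hσ : logNorm R + 200 * K - 2 * logHeight x (k + 2) - 2 * logHeight x (k + 4) ≤ σ)
    (hsize : HasLogSize (50 * K) (aeval (nearSeq x (k + 2)) R) σ) :
    HasLogSize (100 * K) (aeval (nearSeq x k) R)
      (σ + 2 * logHeight x (k + 4) - 2 * logHeight x (k + 2)) := by
  have hK := h.one_le
  have hl := h.large (k + 2)
  have hgrow : _ ≤ logHeight x (k + 3) := h.le_logHeight_succ (k + 2)
  have hgrow' : _ ≤ logHeight x (k + 4) := h.le_logHeight_succ (k + 3)
  have hlin := (h.abs_aeval_nearSeq_sub_le hR (k + 2) hs).trans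
    (exp_add_exp_le (s := σ - 51 * K - 1) (by linarith) (by linarith))
  rw [abs_sub_comm, mul_comm] at hlin
  have hder := (hsize.of_abs_sub_le hlin (by linarith) (by linarith)).of_mul_left
    (h.hasLogSize_nearSeq_sub (k + 2))
  have hlin' := (h.abs_aeval_nearSeq_sub_le hR k hs).trans (exp_add_exp_le
    (s := σ + 2 * logHeight x (k + 4) - 2 * logHeight x (k + 2) - 100 * K)
    (by linarith) (by linarith))
  convert ((hder.mul (h.hasLogSize_nearSeq_sub k)).of_abs_sub_le hlin' (by linarith)
    (by linarith)).mono (K' := 100 * K) (by linarith) using 1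
  ring

lemma hasLogSize_aeval_farSeq_of_add_two (h : MarkoffApprox ξ K x) (hR : R.natDegree ≤ 6) {k : ℕ}
    {σ : ℝ} (hσ : logNorm R + 200 * K - 2 * logHeight x k ≤ σ)
    (hsize : HasLogSize (50 * K) (aeval (farSeq x (k + 2)) R) σ) :
    HasLogSize (51 * K) (aeval (farSeq x k) R) σ := by
  have hK := h.one_le
  have hsub : |aeval (farSeq x k) R - aeval (farSeq x (k + 2)) R| ≤
      Real.exp (logNorm R + 5 * K - 2 * logHeight x k) := by
    have hfar := h.abs_farSeq_sub_le_four
    calc _ ≤ Real.exp (logNorm R + K) * |farSeq x k - farSeq x (k + 2)| :=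
          h.abs_aeval_sub_aeval_le_exp hR (by linarith [hfar k]) (by linarith [hfar (k + 2)])
      _ ≤ Real.exp (logNorm R + K) * Real.exp (4 * K - 2 * logHeight x k) := by
          gcongr
          rw [abs_sub_comm]
          exact h.abs_farSeq_add_two_sub_le k
      _ = _ := by rw [← Real.exp_add]; ring_nf
  exact (hsize.of_abs_sub_le hsub (by linarith) (by linarith)).mono (by linarith)

/-- The sizes at level `k + 1` are read off from those at level `k + 3`. -/
lemma exists_hasLogSize_weight_mul_aeval (h : MarkoffApprox ξ K x) (hR0 : R ≠ 0)
    (hR : R.natDegree ≤ 6) (k : ℕ) (hh : logNorm R ≤ 0.79 * logHeight x (k + 1))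
    (hr : |aeval ξ R| ≤ Real.exp (-15.5 * logHeight x (k + 1))) :
    ∃ μ, μ ≤ 1.18 * logHeight x (k + 1) ∧
      HasLogSize (200 * K) (nearWeight x k (-2) 3 * aeval (nearSeq x (k + 1)) R)
        (μ - logHeight x (k + 1)) ∧
      HasLogSize (200 * K) (farWeight x k (-2) 3 * aeval (farSeq x (k + 1)) R)
        (μ + logHeight x (k + 1) - 2 * logHeight x k) := by
  have hK := h.one_le
  have hl := h.large (k + 1)
  have hgrow := h.le_logHeight_succ k
  have hgrow' := h.logHeight_succ_le k
  have hfib := abs_le.1 (h.abs_logHeight_add_two_sub_le k)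
  have hfib₁ : -_ ≤ logHeight x (k + 3) - logHeight x (k + 2) - logHeight x (k + 1) ∧ _ ≤ _ :=
    abs_le.1 (h.abs_logHeight_add_two_sub_le (k + 1))
  have hfib₂ : -_ ≤ logHeight x (k + 4) - logHeight x (k + 3) - logHeight x (k + 2) ∧ _ ≤ _ :=
    abs_le.1 (h.abs_logHeight_add_two_sub_le (k + 2))
  have hfib₃ : -_ ≤ logHeight x (k + 5) - logHeight x (k + 4) - logHeight x (k + 3) ∧ _ ≤ _ :=
    abs_le.1 (h.abs_logHeight_add_two_sub_le (k + 3))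
  obtain ⟨μ, hμ0, hμ, hnear, hfar⟩ := h.exists_hasLogSize_aeval hR0 hR (k + 2)
    (show _ ≤ 0.31 * logHeight x (k + 3) by linarith)
    (hr.trans (Real.exp_le_exp.2 (show _ ≤ -4 * logHeight x (k + 3) - _ - _ by linarith)))
  have hnear' := h.hasLogSize_aeval_nearSeq_of_add_two (k := k + 1) hR hr
    (by linarith) (by linarith) hnear
  have hfar' := h.hasLogSize_aeval_farSeq_of_add_two (k := k + 1) hR (by linarith) hfar
  have hw := h.hasLogSize_nearWeight k (i := -2) (j := 3) (by norm_num) (by norm_num)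
  have hw' := h.hasLogSize_farWeight k (i := -2) (j := 3) (by norm_num) (by norm_num)
  push_cast at hw hw'
  exact ⟨μ, by linarith,
    ((hw.mul hnear').shift (K' := 50 * K) (abs_le.2 ⟨by linarith, by linarith⟩)).mono
      (by linarith),
    ((hw'.mul hfar').shift (K' := 50 * K) (abs_le.2 ⟨by linarith, by linarith⟩)).mono
      (by linarith)⟩

/-- The two weighted values would be the same integer, but their sizes differ. -/
lemma lt_abs_aeval_of_natDegree_le_six (h : MarkoffApprox ξ K x) (hR0 : R ≠ 0)
    (hR : R.natDegree ≤ 6) (k : ℕ) (hh : logNorm R ≤ 0.79 * logHeight x (k + 1)) :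
    Real.exp (-15.5 * logHeight x (k + 1)) < |aeval ξ R| := by
  by_contra! hr
  have hK := h.one_le
  have hl := h.large (k + 1)
  have hgrow := h.le_logHeight_succ k
  have hgrow' := h.logHeight_succ_le k
  obtain ⟨μ, hμ, hv, hv'⟩ := h.exists_hasLogSize_weight_mul_aeval hR0 hR k hh hr
  obtain ⟨m, -, hm, hm'⟩ := h.exists_intCast_eq_of_natDegree_le hR0 (i := -2) (j := 3) hR
    (by norm_num) (by norm_num) k (by linarith)
    (hv.abs_le_exp.trans (Real.exp_le_exp.2 (by linarith)))
    (hv'.abs_le_exp.trans (Real.exp_le_exp.2 (by linarith)))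
  have hsub := abs_le.1 ((hm ▸ hv).abs_sub_le (hm' ▸ hv'))
  linarith

end MarkoffApprox

/-! ### Choice of the index -/

namespace MarkoffApprox

variable {ξ K : ℝ} {x : ℕ → Matrix (Fin 2) (Fin 2) ℤ} {R : ℤ[X]}

lemma logHeight_pos (h : MarkoffApprox ξ K x) (k : ℕ) : 0 < logHeight x k := by
  linarith [h.large k, h.one_le]

lemma natCast_le_logHeight (h : MarkoffApprox ξ K x) (k : ℕ) : (k : ℝ) ≤ logHeight x k := by
  induction k with
  | zero => simpa using (h.logHeight_pos 0).le
  | succ k ih =>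
    push_cast
    linarith [h.large k, h.one_le, h.le_logHeight_succ k]

lemma exists_le_logHeight_succ_le (h : MarkoffApprox ξ K x) {y : ℝ} (hy : 0 ≤ y) :
    ∃ k, y ≤ logHeight x (k + 1) ∧ logHeight x (k + 1) ≤ 1.6191 * y + logHeight x 1 := by
  classical
  have hex : ∃ k, y ≤ logHeight x (k + 1) := by
    obtain ⟨k, hk⟩ := exists_nat_ge y
    refine ⟨k, (hk.trans ?_).trans (h.natCast_le_logHeight (k + 1))⟩
    exact_mod_cast k.le_succ
  refine ⟨Nat.find hex, Nat.find_spec hex, ?_⟩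
  rcases hfind : Nat.find hex with _ | k
  · rw [zero_add]
    linarith
  · have hlt : logHeight x (k + 1) < y := not_le.1 (Nat.find_min hex (m := k) (by omega))
    linarith [h.logHeight_succ_le (k + 1), h.logHeight_pos 1]

lemma exp_le_of_forall_logHeight (h : MarkoffApprox ξ K x) {l κ E y r : ℝ} (hl : 0 < l)
    (hκ : 0 ≤ κ) (hE : κ * 1.6191 ≤ E * l) (hy : 0 ≤ y)
    (H : ∀ k, y ≤ l * logHeight x (k + 1) → Real.exp (-κ * logHeight x (k + 1)) < r) :
    Real.exp (-E * y - κ * logHeight x 1) ≤ r := by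
  obtain ⟨k, hk, hk'⟩ := h.exists_le_logHeight_succ_le (div_nonneg hy hl.le)
  refine (Real.exp_le_exp.2 ?_).trans (H k ((div_le_iff₀' hl).1 hk)).le
  have hEy : κ * 1.6191 * (y / l) ≤ E * y :=
    calc κ * 1.6191 * (y / l) ≤ E * l * (y / l) :=
          mul_le_mul_of_nonneg_right hE (div_nonneg hy hl.le)
      _ = E * y := by rw [mul_assoc, mul_div_cancel₀ _ hl.ne']
  linarith [mul_le_mul_of_nonneg_left hk' hκ]

lemma exp_le_abs_aeval_of_natDegree_le_three (h : MarkoffApprox ξ K x) (hR0 : R ≠ 0)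
    (hR : R.natDegree ≤ 3) :
    Real.exp (-gold ^ 3 * logNorm R - 4 * logHeight x 1) ≤ |aeval ξ R| := by
  have hK := h.one_le
  have hcube : gold ^ 3 = 2 * gold + 1 := by linear_combination (gold + 1) * gold_sq
  by_contra! hlt
  refine hlt.not_ge (h.exp_le_of_forall_logHeight (l := 1.6178) (by norm_num) (by norm_num)
    (by linarith [lt_gold]) (logNorm_nonneg R) fun k hk => ?_)
  by_contra! hr
  have hgrow : _ ≤ logHeight x (k + 2) := h.le_logHeight_succ (k + 1)
  obtain ⟨hnear, hfar⟩ := h.aeval_eq_zero_of_natDegree_le_three hR k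
    (by linarith [h.large (k + 1)])
    (hr.trans (Real.exp_le_exp.2 (by linarith [h.le_logHeight_succ k, h.large (k + 1)])))
  refine hlt.not_ge ((Real.exp_le_exp.2 ?_).trans
    (h.exp_le_abs_aeval_of_aeval_eq_zero hR0 hR hnear hfar))
  linarith [h.large 1]

lemma exp_le_abs_aeval_of_four_le_natDegree (h : MarkoffApprox ξ K x) (hR : 4 ≤ R.natDegree)
    (hR' : R.natDegree ≤ 6) :
    Real.exp ((gold ^ 2 - 2 * gold ^ R.natDegree) * logNorm R - 16 * logHeight x 1) ≤
      |aeval ξ R| := by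
  have hR0 : R ≠ 0 := by
    rintro rfl
    simp at hR
  obtain ⟨l, κ, hl, hκ, hκ', hE, H⟩ : ∃ l κ : ℝ, 0 < l ∧ 0 ≤ κ ∧ κ ≤ 16 ∧
      κ * 1.6191 ≤ (2 * gold ^ R.natDegree - gold ^ 2) * l ∧ ∀ k,
        logNorm R ≤ l * logHeight x (k + 1) →
          Real.exp (-κ * logHeight x (k + 1)) < |aeval ξ R| := by
    have hpow₄ : gold ^ 4 = 3 * gold + 2 := by
      linear_combination (gold ^ 2 + gold + 2) * gold_sq
    have hpow₅ : gold ^ 5 = 5 * gold + 3 := by linear_combination gold * hpow₄ + 3 * gold_sq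
    have hpow₆ : gold ^ 6 = 8 * gold + 5 := by linear_combination gold * hpow₅ + 5 * gold_sq
    obtain hd | hd | hd : R.natDegree = 4 ∨ R.natDegree = 5 ∨ R.natDegree = 6 := by omega
    · refine ⟨0.9, 4.5, by norm_num, by norm_num, by norm_num, ?_,
        h.lt_abs_aeval_of_natDegree_le_four hR0 hd.le⟩
      rw [hd]
      linarith [gold_sq, lt_gold]
    · refine ⟨0.45, 4.8, by norm_num, by norm_num, by norm_num, ?_,
        h.lt_abs_aeval_of_natDegree_le_five hR0 hd.le⟩
      rw [hd]
      linarith [gold_sq, lt_gold]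
    · refine ⟨0.79, 15.5, by norm_num, by norm_num, by norm_num, ?_,
        h.lt_abs_aeval_of_natDegree_le_six hR0 hd.le⟩
      rw [hd]
      linarith [gold_sq, lt_gold]
  refine (Real.exp_le_exp.2 ?_).trans
    (h.exp_le_of_forall_logHeight hl hκ hE (logNorm_nonneg R) H)
  nlinarith [h.logHeight_pos 1]

end MarkoffApprox

lemma exp_mul_polyNorm_rpow {R : ℤ[X]} (hR : R ≠ 0) (s E : ℝ) :
    Real.exp s * (polyNorm R : ℝ) ^ E = Real.exp (E * logNorm R + s) := by
  rw [Real.rpow_def_of_pos (by linarith [one_le_polyNorm hR]), ← Real.exp_add, logNorm]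
  ring_nf

theorem stmt4 (ξ : ℝ) (x : ℕ → Matrix (Fin 2) (Fin 2) ℤ) (hx : MarkoffSeq ξ x) :
    ∃ c : ℝ, 0 < c ∧ ∀ R : Polynomial ℤ, R ≠ 0 → R.natDegree ≤ 6 →
      (R.natDegree ≤ 3 →
        |Polynomial.aeval ξ R| ≥ c * (polyNorm R : ℝ) ^ (-(gold ^ 3))) ∧
      (4 ≤ R.natDegree →
        |Polynomial.aeval ξ R| ≥
          c * (polyNorm R : ℝ) ^ (gold ^ 2 - 2 * gold ^ R.natDegree)) := by
  obtain ⟨K, n, h⟩ := hx.exists_markoffApprox_shift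
  set t := logHeight (fun k => x (k + 2 * n)) 1
  have ht : 0 < t := h.logHeight_pos 1
  refine ⟨Real.exp (-(16 * t)), Real.exp_pos _, fun R hR hdeg => ?_⟩
  rw [exp_mul_polyNorm_rpow hR, exp_mul_polyNorm_rpow hR]
  exact ⟨fun hd => (Real.exp_le_exp.2 (by linarith)).trans
      (h.exp_le_abs_aeval_of_natDegree_le_three hR hd),
    fun hd => h.exp_le_abs_aeval_of_four_le_natDegree hd hdeg⟩
end

section
/- There exists a constant c > 0 such that for every integer k ≥ 1: (i) |x_{k,0}·x_{k+2,0}·ξ⁴ − B_k + 2·(−1)^k·x_{k+1,2}·ξ| ≤ c/X_{k+1}; (ii) there exists an integer n with |x_{k,0}·x_{k+1,0}·x_{k+3,0}·ξ⁵ + 6·x_{k+1,2}·ξ − n| ≤ c/X_{k+1}; (iii) there exists an integer n with |x_{k,0}·x_{k+1,2}·x_{k+3,2}·ξ + 2·x_{k+1,2}·ξ − n| ≤ c/X_{k+1}. -/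
open Polynomial Filter

/-! Write `p, q, r` for the entries `0 0`, `0 1`, `1 1` of a matrix. Since `p ξ - q` and `q ξ - r`
are `O(1/X)`, a factor `ξ` next to an entry of `x (k + 2)` is absorbed at the cost of moving to the
next entry, and `X_k X_{k+1} = O(X_{k+2})` keeps the error at `O(1/X_{k+1})` in the presence of an
entry of `x k`. The resulting integral expressions are linked by two consequences of the recurrence:
the minors of `x k` and `x (k + 2)` are entries of `M * x (k + 1)`, because
`(x k)⁻¹ * x (k + 2) = M * x (k + 1)`, and the Cayley–Hamilton theorem for `M * x (k + 1)` expresses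
`x (k + 3)` through `x (k + 2)` and `x k`. They also give `p (p ξ - q) = ±1/3 + O(1/X²)`, which is
where the integral multiples of `r ξ` come from.

The growth `X_k X_{k+1} = O(X_{k+2})` follows from the recurrence itself, since its first entry
reads `p_{k+2} = 3 p_k p_{k+1} ± (p_k q_{k+1} - q_k p_{k+1})` with a minor of size `O(X_{k+1})`. -/

open Asymptotics

lemma sq_eq_trace_smul_sub_det_smul {R : Type*} [CommRing R] (A : Matrix (Fin 2) (Fin 2) R) :
    A * A = A.trace • A - A.det • 1 := by
  ext i j
  fin_cases i <;> fin_cases j <;>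
    simp [Matrix.mul_apply, Matrix.trace_fin_two, Matrix.det_fin_two] <;> ring

lemma neg_one_pow_sq {R : Type*} [Ring R] (k : ℕ) : ((-1 : R) ^ k) ^ 2 = 1 := by
  rw [← pow_mul, mul_comm, pow_mul, neg_one_sq, one_pow]

lemma neg_one_pow_mul_isBigO {α E : Type*} [Norm E] {l : Filter α} {f : α → ℝ} {g : α → E}
    (h : f =O[l] g) (n : α → ℕ) : (fun a => (-1) ^ n a * f a) =O[l] g :=
  (isBigO_of_le l fun a => by simp).trans h

lemma isBigO_top_comp_add {E F : Type*} [Norm E] [Norm F] {f : ℕ → E} {g : ℕ → F}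
    (h : f =O[⊤] g) (m : ℕ) : (fun k => f (k + m)) =O[⊤] fun k => g (k + m) :=
  h.comp_tendsto tendsto_top

lemma Mmat_add_two (k : ℕ) : Mmat (k + 2) = Mmat k := by
  simp [Mmat, pow_succ]

lemma Mmat_transpose (k : ℕ) : (Mmat k).transpose = Mmat (k + 1) := by
  ext i j
  fin_cases i <;> fin_cases j <;> simp [Mmat, pow_succ]

lemma det_Mmat (k : ℕ) : (Mmat k).det = 1 := by
  rw [Mmat, Matrix.det_fin_two_of]
  linear_combination neg_one_pow_sq (R := ℤ) k

lemma Mmat_mul_apply_zero (k : ℕ) (A : Matrix (Fin 2) (Fin 2) ℤ) (j : Fin 2) :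
    (Mmat k * A) 0 j = 3 * A 0 j + (-1) ^ k * A 1 j := by
  rw [Matrix.mul_apply, Fin.sum_univ_two]
  rfl

lemma Mmat_mul_apply_one (k : ℕ) (A : Matrix (Fin 2) (Fin 2) ℤ) (j : Fin 2) :
    (Mmat k * A) 1 j = (-1) ^ (k + 1) * A 0 j := by
  simp [Matrix.mul_apply, Mmat]

lemma trace_Mmat_mul (k : ℕ) {A : Matrix (Fin 2) (Fin 2) ℤ} (hA : A.IsSymm) :
    (Mmat k * A).trace = 3 * A 0 0 := by
  rw [Matrix.trace_fin_two, Mmat_mul_apply_zero, Mmat_mul_apply_one, hA.apply 0 1]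
  ring

lemma Xnorm_nonneg (x : ℕ → Matrix (Fin 2) (Fin 2) ℤ) (k : ℕ) : 0 ≤ Xnorm x k :=
  (abs_nonneg _).trans (le_max_left _ _)

/-- The error of the approximation of `ξ` by the quotient of the two entries in row `i` of `x k`,
multiplied by the denominator. -/
def rowError (ξ : ℝ) (x : ℕ → Matrix (Fin 2) (Fin 2) ℤ) (i : Fin 2) (k : ℕ) : ℝ :=
  x k i 0 * ξ - x k i 1

/-- A sequence of symmetric matrices in `SL₂(ℤ)` whose rows approximate `ξ` to the order of the
inverse of their norm and which satisfies the Markoff recurrence. The sequence is numbered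
from `0`, so that `x k` is the `x_{k+1}` of `MarkoffSeq`, and a bound along the filter `⊤` is a
bound for all indices. -/
structure MarkoffApprox_s7 (ξ : ℝ) (x : ℕ → Matrix (Fin 2) (Fin 2) ℤ) : Prop where
  isSymm (k : ℕ) : (x k).IsSymm
  det_eq_one (k : ℕ) : (x k).det = 1
  add_two (k : ℕ) : x (k + 2) = x k * Mmat (k + 1) * x (k + 1)
  rowError_isBigO (i : Fin 2) : rowError ξ x i =O[⊤] fun k => (Xnorm x k)⁻¹
  Xnorm_isBigO_succ : Xnorm x =O[⊤] fun k => Xnorm x (k + 1)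

namespace MarkoffApprox_s7

variable {ξ : ℝ} {x : ℕ → Matrix (Fin 2) (Fin 2) ℤ}

lemma apply_one_zero (hx : MarkoffApprox_s7 ξ x) (k : ℕ) : x k 1 0 = x k 0 1 :=
  (hx.isSymm k).apply 0 1

lemma det_entries (hx : MarkoffApprox_s7 ξ x) (k : ℕ) :
    (x k 0 0 : ℝ) * x k 1 1 - x k 0 1 * x k 0 1 = 1 := by
  have h := hx.det_eq_one k
  rw [Matrix.det_fin_two, hx.apply_one_zero] at h
  exact_mod_cast h

lemma add_two_symm (hx : MarkoffApprox_s7 ξ x) (k : ℕ) :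
    x (k + 2) = x (k + 1) * Mmat k * x k := by
  rw [← (hx.isSymm (k + 2)).eq, hx.add_two, Matrix.transpose_mul, Matrix.transpose_mul,
    (hx.isSymm k).eq, (hx.isSymm (k + 1)).eq, Mmat_transpose, Mmat_add_two, Matrix.mul_assoc]

lemma adjugate_mul_add_two (hx : MarkoffApprox_s7 ξ x) (k : ℕ) :
    (x k).adjugate * x (k + 2) = Mmat (k + 1) * x (k + 1) := by
  rw [hx.add_two, Matrix.mul_assoc, ← Matrix.mul_assoc, Matrix.adjugate_mul, hx.det_eq_one,
    one_smul, Matrix.one_mul]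

lemma add_three (hx : MarkoffApprox_s7 ξ x) (k : ℕ) :
    x (k + 3) = (3 * x (k + 1) 0 0) • x (k + 2) - x k := by
  set A := Mmat (k + 1) * x (k + 1)
  have hA : A * A = (3 * x (k + 1) 0 0) • A - 1 := by
    rw [sq_eq_trace_smul_sub_det_smul, trace_Mmat_mul _ (hx.isSymm _), Matrix.det_mul, det_Mmat,
      hx.det_eq_one, one_mul, one_smul]
  calc x (k + 3) = x k * (A * A) := by
        rw [hx.add_two_symm (k + 1), hx.add_two]
        simp only [A, Matrix.mul_assoc]
    _ = (3 * x (k + 1) 0 0) • x (k + 2) - x k := by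
        rw [hA, Matrix.mul_sub, Matrix.mul_smul, Matrix.mul_one, hx.add_two, Matrix.mul_assoc]

lemma apply_add_three (hx : MarkoffApprox_s7 ξ x) (k : ℕ) (i j : Fin 2) :
    (x (k + 3) i j : ℝ) = 3 * x (k + 1) 0 0 * x (k + 2) i j - x k i j := by
  rw [hx.add_three, Matrix.sub_apply, Matrix.smul_apply, smul_eq_mul]
  push_cast
  rfl

lemma apply_zero_zero_add_two (hx : MarkoffApprox_s7 ξ x) (k : ℕ) :
    (x (k + 2) 0 0 : ℝ) = 3 * x k 0 0 * x (k + 1) 0 0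
      + (-1) ^ (k + 1) * (x k 0 0 * x (k + 1) 0 1 - x k 0 1 * x (k + 1) 0 0) := by
  rw [hx.add_two, Matrix.mul_assoc, Matrix.mul_apply, Fin.sum_univ_two, Mmat_mul_apply_zero,
    Mmat_mul_apply_one, hx.apply_one_zero]
  push_cast
  ring

lemma minor_zero_add_two (hx : MarkoffApprox_s7 ξ x) (k : ℕ) (j : Fin 2) :
    (x k 1 1 : ℝ) * x (k + 2) 0 j - x k 0 1 * x (k + 2) 1 j
      = 3 * x (k + 1) 0 j + (-1) ^ (k + 1) * x (k + 1) 1 j := by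
  have h := congrFun₂ (hx.adjugate_mul_add_two k) 0 j
  rw [Mmat_mul_apply_zero, Matrix.adjugate_fin_two, Matrix.mul_apply, Fin.sum_univ_two] at h
  have h' : (x k 1 1 * x (k + 2) 0 j + -x k 0 1 * x (k + 2) 1 j : ℝ)
      = 3 * x (k + 1) 0 j + (-1) ^ (k + 1) * x (k + 1) 1 j := mod_cast h
  linear_combination h'

lemma minor_one_add_two (hx : MarkoffApprox_s7 ξ x) (k : ℕ) (j : Fin 2) :
    (x k 0 0 : ℝ) * x (k + 2) 1 j - x k 0 1 * x (k + 2) 0 j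
      = (-1) ^ k * x (k + 1) 0 j := by
  have h := congrFun₂ (hx.adjugate_mul_add_two k) 1 j
  rw [Mmat_mul_apply_one, Matrix.adjugate_fin_two, Matrix.mul_apply, Fin.sum_univ_two,
    hx.apply_one_zero] at h
  have h' : (-x k 0 1 * x (k + 2) 0 j + x k 0 0 * x (k + 2) 1 j : ℝ)
      = (-1) ^ (k + 1 + 1) * x (k + 1) 0 j := mod_cast h
  linear_combination h'

lemma minor_one_add_three (hx : MarkoffApprox_s7 ξ x) (k : ℕ) :
    (x k 0 0 : ℝ) * x (k + 3) 1 1 - x k 0 1 * x (k + 3) 0 1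
      = 3 * (-1) ^ k * x (k + 1) 0 0 * x (k + 1) 0 1 - 1 := by
  rw [hx.apply_add_three, hx.apply_add_three]
  linear_combination 3 * (x (k + 1) 0 0 : ℝ) * hx.minor_one_add_two k 1 - hx.det_entries k

lemma one_le_abs_apply_zero_zero (hx : MarkoffApprox_s7 ξ x) (k : ℕ) : 1 ≤ |(x k 0 0 : ℝ)| := by
  have h : x k 0 0 ≠ 0 := fun h0 => by
    have hd := hx.det_entries k
    rw [h0, Int.cast_zero, zero_mul] at hd
    linarith [mul_self_nonneg (x k 0 1 : ℝ)]
  exact_mod_cast Int.one_le_abs h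

lemma one_le_Xnorm (hx : MarkoffApprox_s7 ξ x) (k : ℕ) : 1 ≤ Xnorm x k :=
  (hx.one_le_abs_apply_zero_zero k).trans (le_max_left _ _)

lemma Xnorm_ne_zero (hx : MarkoffApprox_s7 ξ x) (k : ℕ) : Xnorm x k ≠ 0 :=
  (zero_lt_one.trans_le (hx.one_le_Xnorm k)).ne'

lemma apply_isBigO_Xnorm (hx : MarkoffApprox_s7 ξ x) (i j : Fin 2) :
    (fun k => (x k i j : ℝ)) =O[⊤] Xnorm x := by
  refine .of_norm_le fun k => ?_
  fin_cases i <;> fin_cases j <;> simp [Xnorm, hx.apply_one_zero]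

lemma Xnorm_inv_isBigO_one (hx : MarkoffApprox_s7 ξ x) :
    (fun k => (Xnorm x k)⁻¹) =O[⊤] fun _ => (1 : ℝ) :=
  .of_norm_le fun k => by
    rw [Real.norm_of_nonneg (inv_nonneg.2 (Xnorm_nonneg x k))]
    exact inv_le_one_of_one_le₀ (hx.one_le_Xnorm k)

lemma rowError_isBigO_one (hx : MarkoffApprox_s7 ξ x) (i : Fin 2) :
    rowError ξ x i =O[⊤] fun _ => (1 : ℝ) :=
  (hx.rowError_isBigO i).trans hx.Xnorm_inv_isBigO_one

lemma Xnorm_isBigO_apply_zero_zero (hx : MarkoffApprox_s7 ξ x) :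
    Xnorm x =O[⊤] fun k => (x k 0 0 : ℝ) := by
  have hp := isBigO_refl (fun k => (x k 0 0 : ℝ)) ⊤
  have hone : (fun _ => (1 : ℝ)) =O[⊤] fun k => (x k 0 0 : ℝ) :=
    isBigO_of_le _ fun k => by simpa using hx.one_le_abs_apply_zero_zero k
  have hq : (fun k => (x k 0 1 : ℝ)) =O[⊤] fun k => (x k 0 0 : ℝ) :=
    ((hp.const_mul_left ξ).sub ((hx.rowError_isBigO_one 0).trans hone)).congr_left fun k => by
      rw [rowError]
      ring
  have hr : (fun k => (x k 1 1 : ℝ)) =O[⊤] fun k => (x k 0 0 : ℝ) :=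
    ((hq.const_mul_left ξ).sub ((hx.rowError_isBigO_one 1).trans hone)).congr_left fun k => by
      rw [rowError, hx.apply_one_zero]
      ring
  exact (hp.prod_left (hq.prod_left hr)).norm_left

lemma Xnorm_mul_succ_isBigO (hx : MarkoffApprox_s7 ξ x) :
    (fun k => Xnorm x k * Xnorm x (k + 1)) =O[⊤] fun k => Xnorm x (k + 2) := by
  have hp := hx.apply_isBigO_Xnorm 0 0
  have hX := isBigO_top_comp_add hx.Xnorm_isBigO_succ 1
  have he := hx.rowError_isBigO_one 0
  have h₁ : (fun k => x (k + 1) 0 0 * rowError ξ x 0 k) =O[⊤] fun k => Xnorm x (k + 2) := by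
    simpa only [mul_one] using ((isBigO_top_comp_add hp 1).trans hX).mul he
  have h₂ : (fun k => x k 0 0 * rowError ξ x 0 (k + 1)) =O[⊤] fun k => Xnorm x (k + 2) := by
    simpa only [mul_one] using
      (hp.trans (hx.Xnorm_isBigO_succ.trans hX)).mul (isBigO_top_comp_add he 1)
  have hpp : (fun k => (x k 0 0 : ℝ) * x (k + 1) 0 0) =O[⊤] fun k => Xnorm x (k + 2) := by
    refine (((isBigO_top_comp_add hp 2).sub
      (neg_one_pow_mul_isBigO (h₁.sub h₂) (· + 1))).const_mul_left 3⁻¹).congr_left fun k => ?_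
    simp only [rowError]
    linear_combination 3⁻¹ * hx.apply_zero_zero_add_two k
  have hXp := hx.Xnorm_isBigO_apply_zero_zero
  exact (hXp.mul (isBigO_top_comp_add hXp 1)).trans hpp

lemma Xnorm_inv_succ_isBigO (hx : MarkoffApprox_s7 ξ x) :
    (fun k => (Xnorm x (k + 1))⁻¹) =O[⊤] fun k => (Xnorm x k)⁻¹ :=
  hx.Xnorm_isBigO_succ.inv_rev (.of_forall fun k h => absurd h (hx.Xnorm_ne_zero k))

lemma inv_apply_zero_zero_isBigO (hx : MarkoffApprox_s7 ξ x) :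
    (fun k => (x k 0 0 : ℝ)⁻¹) =O[⊤] fun k => (Xnorm x k)⁻¹ :=
  hx.Xnorm_isBigO_apply_zero_zero.inv_rev (.of_forall fun k h => absurd h (hx.Xnorm_ne_zero k))

lemma mul_isBigO_Xnorm_inv_succ (hx : MarkoffApprox_s7 ξ x) {u v : ℕ → ℝ}
    (hu : u =O[⊤] Xnorm x) (hv : v =O[⊤] fun k => (Xnorm x (k + 2))⁻¹) :
    (fun k => u k * v k) =O[⊤] fun k => (Xnorm x (k + 1))⁻¹ := by
  have hX := hx.Xnorm_mul_succ_isBigO.mul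
    (isBigO_refl (fun k => (Xnorm x (k + 1))⁻¹ * (Xnorm x (k + 2))⁻¹) ⊤)
  refine (hu.mul hv).trans (hX.congr (fun k => ?_) fun k => ?_)
  · have := hx.Xnorm_ne_zero (k + 1)
    field_simp
  · have := hx.Xnorm_ne_zero (k + 2)
    field_simp

lemma apply_mul_rowError_isBigO (hx : MarkoffApprox_s7 ξ x) (i j l : Fin 2) :
    (fun k => x k i j * rowError ξ x l (k + 2)) =O[⊤] fun k => (Xnorm x (k + 1))⁻¹ :=
  hx.mul_isBigO_Xnorm_inv_succ (hx.apply_isBigO_Xnorm i j)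
    (isBigO_top_comp_add (hx.rowError_isBigO l) 2)

lemma three_mul_apply_mul_rowError_sub_one_isBigO (hx : MarkoffApprox_s7 ξ x) :
    (fun k => 3 * (-1) ^ (k + 1) * x (k + 1) 0 0 * rowError ξ x 0 (k + 1) - 1)
      =O[⊤] fun k => (Xnorm x (k + 1))⁻¹ * (Xnorm x (k + 1))⁻¹ := by
  have hinv := isBigO_top_comp_add hx.inv_apply_zero_zero_isBigO 2
  have hX := isBigO_top_comp_add hx.Xnorm_inv_succ_isBigO 1
  have h₁ := (isBigO_top_comp_add (hx.rowError_isBigO 0) 1).mul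
    (hx.mul_isBigO_Xnorm_inv_succ (hx.apply_isBigO_Xnorm 0 0) hinv)
  have h₂ := ((isBigO_top_comp_add (hx.apply_mul_rowError_isBigO 0 0 0) 1).trans hX).mul
    (hinv.trans hX)
  refine (neg_one_pow_mul_isBigO (h₁.add h₂) (· + 1)).congr_left fun k => ?_
  have hp : (x (k + 2) 0 0 : ℝ) ≠ 0 :=
    abs_pos.1 (zero_lt_one.trans_le (hx.one_le_abs_apply_zero_zero (k + 2)))
  have hcross : 3 * x (k + 1) 0 0 * x (k + 2) 0 0 * rowError ξ x 0 (k + 1)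
      = (-1) ^ (k + 1) * x (k + 2) 0 0 + x k 0 0 * rowError ξ x 0 (k + 1)
        + x (k + 1) 0 0 * rowError ξ x 0 (k + 3) := by
    have hminor := hx.minor_one_add_two (k + 1) 0
    rw [hx.apply_one_zero] at hminor
    simp only [rowError]
    linear_combination hminor
      - (x (k + 1) 0 0 * ξ - x (k + 1) 0 1 : ℝ) * hx.apply_add_three k 0 0
  field_simp
  linear_combination -(-1) ^ (k + 1) * hcross
    - (x (k + 2) 0 0 : ℝ) * neg_one_pow_sq (R := ℝ) (k + 1)

lemma pow_two_approx_isBigO (hx : MarkoffApprox_s7 ξ x) :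
    (fun k => (x k 0 0 : ℝ) * x (k + 2) 1 1 * ξ ^ 2 - (x k 1 1 * x (k + 2) 1 1 - 3 * x (k + 1) 1 1)
      + 2 * (-1) ^ (k + 1) * x (k + 1) 1 1 * ξ) =O[⊤] fun k => (Xnorm x (k + 1))⁻¹ := by
  have he := isBigO_top_comp_add (hx.rowError_isBigO 1) 1
  have h₁ := (hx.apply_mul_rowError_isBigO 0 1 1).const_mul_left ξ
  have h₂ := hx.apply_mul_rowError_isBigO 1 1 1
  have h₃ := he.const_mul_left 3
  have h₄ := (neg_one_pow_mul_isBigO he (· + 1)).const_mul_left ξ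
  refine (((h₁.add h₂).sub h₃).sub h₄).congr_left fun k => ?_
  simp only [rowError, hx.apply_one_zero]
  linear_combination ξ * hx.minor_zero_add_two k 1 - ξ ^ 2 * hx.minor_one_add_two k 1

lemma pow_four_approx_isBigO (hx : MarkoffApprox_s7 ξ x) :
    (fun k => (x k 0 0 : ℝ) * x (k + 2) 0 0 * ξ ^ 4 - (x k 1 1 * x (k + 2) 1 1 - 3 * x (k + 1) 1 1)
      + 2 * (-1) ^ (k + 1) * x (k + 1) 1 1 * ξ) =O[⊤] fun k => (Xnorm x (k + 1))⁻¹ := by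
  have h₁ := (hx.apply_mul_rowError_isBigO 0 0 0).const_mul_left (ξ ^ 3)
  have h₂ := (hx.apply_mul_rowError_isBigO 0 0 1).const_mul_left (ξ ^ 2)
  refine ((h₁.add h₂).add hx.pow_two_approx_isBigO).congr_left fun k => ?_
  simp only [rowError, hx.apply_one_zero]
  ring

lemma exists_int_linear_approx_isBigO (hx : MarkoffApprox_s7 ξ x) :
    ∃ n : ℕ → ℤ, (fun k => (x k 0 0 : ℝ) * x (k + 1) 1 1 * x (k + 3) 1 1 * ξ
      + 2 * x (k + 1) 1 1 * ξ - n k) =O[⊤] fun k => (Xnorm x (k + 1))⁻¹ := by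
  have mul_inv_sq {u v : ℕ → ℝ} (hu : u =O[⊤] fun k => Xnorm x (k + 1))
      (hv : v =O[⊤] fun k => (Xnorm x (k + 1))⁻¹ * (Xnorm x (k + 1))⁻¹) :
      (fun k => u k * v k) =O[⊤] fun k => (Xnorm x (k + 1))⁻¹ :=
    (hu.mul hv).congr_right fun k => mul_inv_cancel_left₀ (hx.Xnorm_ne_zero (k + 1)) _
  have hr := isBigO_top_comp_add (hx.apply_isBigO_Xnorm 1 1) 1
  have he := isBigO_top_comp_add (hx.rowError_isBigO 0) 1
  have h₁ := hx.mul_isBigO_Xnorm_inv_succ (hx.apply_isBigO_Xnorm 0 1)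
    (isBigO_top_comp_add (hx.apply_mul_rowError_isBigO 1 1 1) 1)
  have h₂ := (mul_inv_sq hr hx.three_mul_apply_mul_rowError_sub_one_isBigO).const_mul_left ξ
  have h₃ := (neg_one_pow_mul_isBigO (mul_inv_sq hr (he.mul he)) (· + 1)).const_mul_left 3
  refine ⟨fun k => x k 0 1 * x (k + 1) 1 1 * x (k + 3) 1 1
    - 3 * (-1) ^ (k + 1) * x (k + 1) 0 0 * x (k + 1) 1 1 ^ 2 + 3 * (-1) ^ (k + 1) * x (k + 1) 1 1,
    ((h₁.sub h₂).add h₃).congr_left fun k => ?_⟩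
  simp only [rowError, hx.apply_one_zero]
  push_cast
  linear_combination (-ξ * x (k + 1) 1 1) * hx.minor_one_add_three k
    - 3 * (-1) ^ (k + 1) * (x (k + 1) 1 1 : ℝ) * hx.det_entries (k + 1)

lemma exists_int_pow_five_approx_isBigO (hx : MarkoffApprox_s7 ξ x) :
    ∃ n : ℕ → ℤ, (fun k => (x k 0 0 : ℝ) * x (k + 1) 0 0 * x (k + 3) 0 0 * ξ ^ 5
      + 6 * x (k + 1) 1 1 * ξ - n k) =O[⊤] fun k => (Xnorm x (k + 1))⁻¹ := by
  obtain ⟨n, hn⟩ := hx.exists_int_linear_approx_isBigO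
  have h₁ := (hx.mul_isBigO_Xnorm_inv_succ (hx.apply_isBigO_Xnorm 0 0)
    (isBigO_top_comp_add hx.pow_four_approx_isBigO 1)).const_mul_left ξ
  have h₂ := (hx.apply_mul_rowError_isBigO 0 1 1).const_mul_left 3
  have h₃ := (neg_one_pow_mul_isBigO
    (isBigO_top_comp_add (hx.rowError_isBigO 1) 1) (· + 1)).const_mul_left 3
  have h₄ := (neg_one_pow_mul_isBigO hx.pow_two_approx_isBigO (· + 1)).const_mul_left 2
  refine ⟨fun k => n k - 3 * x k 0 1 * x (k + 2) 1 1 - 3 * (-1) ^ (k + 1) * x (k + 1) 1 1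
    + 2 * (-1) ^ (k + 1) * x k 1 1 * x (k + 2) 1 1,
    ((((h₁.add hn).sub h₂).add h₃).add h₄).congr_left fun k => ?_⟩
  simp only [rowError, hx.apply_one_zero]
  push_cast
  linear_combination 3 * ξ * hx.minor_one_add_two k 1
    + 4 * (x (k + 1) 1 1 : ℝ) * ξ * neg_one_pow_sq (R := ℝ) (k + 1)

end MarkoffApprox_s7

lemma MarkoffSeq.markoffApprox {ξ : ℝ} {x : ℕ → Matrix (Fin 2) (Fin 2) ℤ} (hx : MarkoffSeq ξ x) :
    MarkoffApprox_s7 ξ fun k => x (k + 1) := by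
  obtain ⟨hsymm, hdet, c₁, c₂, c₃, -, -, -, h⟩ := hx
  refine ⟨fun k => ?_, fun k => hdet _ k.succ_pos, fun k => (h _ k.succ_pos).2.2.1.2,
    fun i => isBigO_top.2 ⟨c₃, fun k => ?_⟩, isBigO_of_le _ fun k => ?_⟩
  · rw [Matrix.IsSymm.ext_iff, Fin.forall_fin_two, Fin.forall_fin_two, Fin.forall_fin_two]
    exact ⟨⟨rfl, (hsymm _ k.succ_pos).symm⟩, hsymm _ k.succ_pos, rfl⟩
  · rw [norm_inv, Real.norm_of_nonneg (Xnorm_nonneg _ k), ← div_eq_mul_inv]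
    obtain ⟨-, ⟨herr₀, herr₁⟩, -⟩ := h _ k.succ_pos
    fin_cases i
    · exact herr₀
    · rw [hsymm _ k.succ_pos] at herr₁
      exact herr₁
  · rw [Real.norm_of_nonneg (Xnorm_nonneg _ k), Real.norm_of_nonneg (Xnorm_nonneg _ (k + 1))]
    exact (h _ k.succ_pos).2.2.2.1.le

theorem stmt7_general {ξ : ℝ} {x : ℕ → Matrix (Fin 2) (Fin 2) ℤ} (hx : MarkoffApprox_s7 ξ x) :
    ∃ c : ℝ, 0 < c ∧ ∀ k,
      |(x k 0 0 : ℝ) * (x (k+2) 0 0 : ℝ) * ξ^4 -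
        ((x k 1 1 : ℝ) * (x (k+2) 1 1 : ℝ) - 3 * (x (k+1) 1 1 : ℝ)) +
          2 * (-1)^(k+1) * (x (k+1) 1 1 : ℝ) * ξ| ≤ c / Xnorm x (k+1) ∧
      (∃ n : ℤ, |(x k 0 0 : ℝ) * (x (k+1) 0 0 : ℝ) * (x (k+3) 0 0 : ℝ) * ξ^5 +
          6 * (x (k+1) 1 1 : ℝ) * ξ - (n : ℝ)| ≤ c / Xnorm x (k+1)) ∧
      (∃ n : ℤ, |(x k 0 0 : ℝ) * (x (k+1) 1 1 : ℝ) * (x (k+3) 1 1 : ℝ) * ξ +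
          2 * (x (k+1) 1 1 : ℝ) * ξ - (n : ℝ)| ≤ c / Xnorm x (k+1)) := by
  obtain ⟨m, hm⟩ := hx.exists_int_pow_five_approx_isBigO
  obtain ⟨n, hn⟩ := hx.exists_int_linear_approx_isBigO
  obtain ⟨c, hc, hbound⟩ := (hx.pow_four_approx_isBigO.prod_left (hm.prod_left hn)).exists_pos
  refine ⟨c, hc, fun k => ?_⟩
  have h := isBigOWith_top.1 hbound k
  rw [norm_inv, Real.norm_of_nonneg (Xnorm_nonneg x (k + 1)), ← div_eq_mul_inv,
    norm_prod_le_iff, norm_prod_le_iff] at h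
  exact ⟨h.1, ⟨m k, h.2.1⟩, ⟨n k, h.2.2⟩⟩

theorem stmt7 (ξ : ℝ) (x : ℕ → Matrix (Fin 2) (Fin 2) ℤ) (hx : MarkoffSeq ξ x) :
    ∃ c : ℝ, 0 < c ∧ ∀ k, 1 ≤ k →
      |(x k 0 0 : ℝ) * (x (k+2) 0 0 : ℝ) * ξ^4 -
        ((x k 1 1 : ℝ) * (x (k+2) 1 1 : ℝ) - 3 * (x (k+1) 1 1 : ℝ)) +
          2 * (-1)^k * (x (k+1) 1 1 : ℝ) * ξ| ≤ c / Xnorm x (k+1) ∧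
      (∃ n : ℤ, |(x k 0 0 : ℝ) * (x (k+1) 0 0 : ℝ) * (x (k+3) 0 0 : ℝ) * ξ^5 +
          6 * (x (k+1) 1 1 : ℝ) * ξ - (n : ℝ)| ≤ c / Xnorm x (k+1)) ∧
      (∃ n : ℤ, |(x k 0 0 : ℝ) * (x (k+1) 1 1 : ℝ) * (x (k+3) 1 1 : ℝ) * ξ +
          2 * (x (k+1) 1 1 : ℝ) * ξ - (n : ℝ)| ≤ c / Xnorm x (k+1)) :=
  let ⟨c, hc, h⟩ := stmt7_general hx.markoffApprox
  ⟨c, hc, fun | k + 1, _ => h k⟩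
end
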